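/- arXiv:1707.01151 — 5 statements merged into one kernel-verified Lean document; each statement's English description precedes it below -/
import Mathlib

section
/- The set of pairs (P, λ) ∈ P_d × (0,1) for which the outer billiard map T_{P,λ} has a singular connection of some order n ≥ 2 has Lebesgue measure zero; equivalently, for almost every (P, λ) ∈ P_d × (0,1), T_{P,λ} has no singular connections. -/
open MeasureTheory Set Filter Metric

noncomputable section

/-- Planar cross product of two complex numbers viewed as vectors of `ℝ²`. -/
def cross (z w : ℂ) : ℝ := z.re * w.im - z.im * w.re

/-- `v` is the tuple of vertices of a convex `d`-gon, cyclically ordered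
(counterclockwise): every vertex lies strictly to the left of every directed edge. -/
def IsConvexPolygon {d : ℕ} [NeZero d] (v : Fin d → ℂ) : Prop :=
  ∀ i j : Fin d, j ≠ i → j ≠ i + 1 → 0 < cross (v (i + 1) - v i) (v j - v i)

/-- The polygon `P`, as a subset of the plane. -/
def polygonSet {d : ℕ} (v : Fin d → ℂ) : Set ℂ := convexHull ℝ (Set.range v)

/-- The open cone `A k`: points `z` outside `P` whose supporting line (oriented from `z`
towards the polygon, with the interior of `P` on its left) meets `P` exactly at the
vertex `v k`. -/
def cone {d : ℕ} (v : Fin d → ℂ) (k : Fin d) : Set ℂ :=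
  {z | ∀ j : Fin d, j ≠ k → 0 < cross (v k - z) (v j - z)}

/-- The singular set `S_P`: the points of `X = ℂ \ P` lying in no cone, i.e. whose
supporting line contains an edge of the polygon. -/
def singSet {d : ℕ} (v : Fin d → ℂ) : Set ℂ :=
  {z | z ∉ polygonSet v ∧ ∀ k : Fin d, z ∉ cone v k}

/-- The outer billiard map of the polygon with vertices `v` with contraction `lam`:
on the cone `A k` it is `z ↦ -lam • z + (1+lam) • v k` (extended arbitrarily outside
the union of the cones, which is its actual domain `X \ S_P`). -/
def billiardMap {d : ℕ} (v : Fin d → ℂ) (lam : ℝ) (z : ℂ) : ℂ :=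
  haveI := Classical.propDecidable (∃ k : Fin d, z ∈ cone v k)
  if h : ∃ k : Fin d, z ∈ cone v k then -(lam : ℂ) * z + (1 + (lam : ℂ)) * v h.choose
  else z

/-- A point is non-singular if its whole forward orbit stays in the union of the open
cones, i.e. never meets the singular set. -/
def NonSingular {d : ℕ} (v : Fin d → ℂ) (lam : ℝ) (z : ℂ) : Prop :=
  ∀ n : ℕ, (billiardMap v lam)^[n] z ∈ ⋃ k : Fin d, cone v k

/-- The ω-limit set of the forward orbit of `z` under `f`. -/
def omegaSet (f : ℂ → ℂ) (z : ℂ) : Set ℂ :=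
  ⋂ m : ℕ, closure ((fun n : ℕ => f^[n] z) '' {n | m ≤ n})

/-- The outer billiard map with contraction is asymptotically periodic: it has finitely
many periodic orbits (equivalently, periodic points) and the ω-limit set of every
non-singular point is a periodic orbit. -/
def AsymptoticallyPeriodic {d : ℕ} (v : Fin d → ℂ) (lam : ℝ) : Prop :=
  {z : ℂ | NonSingular v lam z ∧ ∃ p : ℕ, 1 ≤ p ∧ (billiardMap v lam)^[p] z = z}.Finite ∧
  ∀ z : ℂ, NonSingular v lam z → ∃ w : ℂ, NonSingular v lam w ∧
    (∃ p : ℕ, 1 ≤ p ∧ (billiardMap v lam)^[p] w = w) ∧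
    omegaSet (billiardMap v lam) z = Set.range fun n : ℕ => (billiardMap v lam)^[n] w

/-- `T_{P,λ}` has a singular connection of some order `n ≥ 2`: there is an orbit segment
`x = x_1, …, x_n = T^{n-1}(x)` with `x_1, …, x_{n-1} ∉ S_P`, `x_n ∈ S_P`, and such that
the segment `[x_1, x_n]` contains a side of the polygon. -/
def HasSingularConnection {d : ℕ} [NeZero d] (v : Fin d → ℂ) (lam : ℝ) : Prop :=
  ∃ n : ℕ, 2 ≤ n ∧ ∃ x : ℂ,
    (∀ m : ℕ, m < n - 1 → (billiardMap v lam)^[m] x ∈ ⋃ k : Fin d, cone v k) ∧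
    (billiardMap v lam)^[n - 1] x ∈ singSet v ∧
    ∃ k : Fin d, segment ℝ (v k) (v (k + 1)) ⊆ segment ℝ x ((billiardMap v lam)^[n - 1] x)

/-! Along an orbit segment the signed area `h` spanned with a fixed side of `P` satisfies
`h (x_{m+1}) = -λ h (x_m) + (1 + λ) h (v_{a_m})`, where `a_m` is the vertex used at `x_m`. If the
segment `[x_1, x_n]` contains the side, then `h (x_1) = h (x_n) = 0`, so `λ` is a root of a
polynomial that depends only on `P`, the side and the itinerary. Its leading coefficient is
`± h (v_{a_1})`, which is nonzero by convexity: `x_1` lies on the line through the side, so `a_1` is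
neither endpoint. Hence each `P` and each of the countably many itineraries exclude only finitely
many `λ`, and Fubini's theorem concludes. -/

/-- Twice the signed area of the triangle `p q r`, positive when it is counterclockwise. As a
function of `r` it is an affine form vanishing on the line through `p` and `q`. -/
def doubleArea (p q r : ℂ) : ℝ := cross (q - p) (r - p)

section DoubleArea

variable (p q r s : ℂ)

lemma doubleArea_rotate : doubleArea q r p = doubleArea p q r := by
  simp only [doubleArea, cross, Complex.sub_re, Complex.sub_im]
  ring

lemma doubleArea_swap : doubleArea p r q = -doubleArea p q r := by
  simp only [doubleArea, cross, Complex.sub_re, Complex.sub_im]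
  ring

lemma doubleArea_affine (lam : ℝ) :
    doubleArea p q (-(lam : ℂ) * r + (1 + (lam : ℂ)) * s) =
      -lam * doubleArea p q r + (1 + lam) * doubleArea p q s := by
  simp only [doubleArea, cross, Complex.add_re, Complex.add_im, Complex.sub_re, Complex.sub_im,
    Complex.mul_re, Complex.mul_im, Complex.neg_re, Complex.neg_im, Complex.one_re, Complex.one_im,
    Complex.ofReal_re, Complex.ofReal_im]
  ring

@[fun_prop]
lemma continuous_doubleArea {α : Type*} [TopologicalSpace α] {f g h : α → ℂ}
    (hf : Continuous f) (hg : Continuous g) (hh : Continuous h) :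
    Continuous fun a => doubleArea (f a) (g a) (h a) := by
  unfold doubleArea cross
  fun_prop

variable {p q r s}

lemma doubleArea_eq_zero_of_mem_segment (hp : p ∈ segment ℝ r s) (hq : q ∈ segment ℝ r s) :
    doubleArea p q r = 0 := by
  rw [segment_eq_image'] at hp hq
  obtain ⟨a, -, rfl⟩ := hp
  obtain ⟨b, -, rfl⟩ := hq
  simp only [doubleArea, cross, Complex.add_re, Complex.add_im, Complex.sub_re, Complex.sub_im,
    Complex.smul_re, Complex.smul_im, smul_eq_mul]
  ring

end DoubleArea

section HeightPoly

open Polynomial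

variable {R : Type*} [CommRing R] {n : ℕ}

/-- The polynomial in `λ` whose value is the `n`-th term of the sequence `y` with `y 0 = 0` and
`y (m + 1) = -λ * y m + (1 + λ) * c m`. -/
def heightPoly (c : Fin n → R) : R[X] :=
  (X + 1) * ∑ m, C (c m) * (-X) ^ (m.rev : ℕ)

lemma eq_pow_mul_add_sum_of_recurrence {S : Type*} [Semiring S] {u : S} {b : Fin n → S} {y : ℕ → S}
    (hy : ∀ m : Fin n, y (m + 1) = u * y m + b m) :
    y n = u ^ n * y 0 + ∑ m, u ^ (m.rev : ℕ) * b m := by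
  induction n with
  | zero => simp
  | succ n ih =>
    have hlast : y (n + 1) = u * y n + b (Fin.last n) := hy (Fin.last n)
    have hprev : y n = u ^ n * y 0 + ∑ m : Fin n, u ^ (m.rev : ℕ) * b m.castSucc :=
      ih fun m => hy m.castSucc
    rw [hlast, hprev, Fin.sum_univ_castSucc]
    simp [Fin.rev_castSucc, pow_succ', mul_add, Finset.mul_sum, mul_assoc, add_assoc]

lemma eval_heightPoly (c : Fin n → R) (lam : R) :
    (heightPoly c).eval lam = (lam + 1) * ∑ m, c m * (-lam) ^ (m.rev : ℕ) := by
  simp [heightPoly, eval_finsetSum]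

lemma eval_heightPoly_of_recurrence {c : Fin n → R} {lam : R} {y : ℕ → R} (hy₀ : y 0 = 0)
    (hy : ∀ m : Fin n, y (m + 1) = -lam * y m + (1 + lam) * c m) :
    (heightPoly c).eval lam = y n := by
  rw [eval_heightPoly, eq_pow_mul_add_sum_of_recurrence hy, hy₀, mul_zero, zero_add,
    Finset.mul_sum]
  exact Finset.sum_congr rfl fun m _ => by ring

lemma heightPoly_ne_zero {c : Fin (n + 1) → R} (hc : c 0 ≠ 0) : heightPoly c ≠ 0 := by
  have hmonomial (m : Fin (n + 1)) :
      C (c m) * (-X) ^ (m.rev : ℕ) = monomial (m.rev : ℕ) ((-1) ^ (m.rev : ℕ) * c m) := by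
    rw [neg_pow, ← C_mul_X_pow_eq_monomial]
    simp only [map_mul, map_pow, map_neg, map_one]
    ring
  have hcoeff : (∑ m, C (c m) * (-X) ^ (m.rev : ℕ)).coeff n = (-1) ^ n * c 0 := by
    rw [finsetSum_coeff, Finset.sum_eq_single_of_mem 0 (Finset.mem_univ _) fun m _ hm => ?_]
    · rw [hmonomial, Fin.rev_zero, Fin.val_last, coeff_monomial_same]
    · have hm_pos : 0 < (m : ℕ) := Fin.pos_iff_ne_zero.2 hm
      rw [hmonomial, coeff_monomial, Fin.val_rev, if_neg (by omega)]
  refine (monic_X_add_C (1 : R)).mul_right_ne_zero fun hzero => hc ?_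
  rw [hzero, coeff_zero] at hcoeff
  exact ((isUnit_one.neg.pow n).mul_right_eq_zero).1 hcoeff.symm

lemma measure_prod_setOf_isRoot_eq_zero [IsDomain R] [MeasurableSpace R]
    [MeasurableSingletonClass R] {α : Type*} [MeasurableSpace α] {μ : Measure α} {ν : Measure R}
    [NullSingletonClass ν] {P : α → Prop} {p : α → R[X]} (hP : MeasurableSet {x | P x})
    (hp : ∀ x, P x → p x ≠ 0) (hmeas : Measurable fun q : α × R => (p q.1).eval q.2) :
    μ.prod ν {q | P q.1 ∧ (p q.1).IsRoot q.2} = 0 := by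
  refine Measure.measure_prod_null_of_ae_null
    ((measurable_fst hP).inter (hmeas (measurableSet_singleton 0))) (.of_forall fun x => ?_)
  by_cases hx : P x
  · exact measure_mono_null (fun t ht => ht.2) ((finite_setOfPred_isRoot (hp x hx)).measure_zero ν)
  · simp [preimage, hx]

end HeightPoly

section OuterBilliard

variable {d : ℕ} {v : Fin d → ℂ} {lam : ℝ} {z : ℂ}

lemma eq_of_mem_cone_of_mem_cone {i j : Fin d} (hi : z ∈ cone v i) (hj : z ∈ cone v j) :
    i = j := by
  by_contra hij
  have hij_pos : 0 < doubleArea z (v i) (v j) := hi j (Ne.symm hij)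
  have hji_pos : 0 < doubleArea z (v j) (v i) := hj i hij
  linarith [doubleArea_swap z (v i) (v j)]

lemma billiardMap_of_mem_cone {a : Fin d} (hz : z ∈ cone v a) :
    billiardMap v lam z = -(lam : ℂ) * z + (1 + (lam : ℂ)) * v a := by
  have hex : ∃ k, z ∈ cone v k := ⟨a, hz⟩
  rw [billiardMap, dif_pos hex, eq_of_mem_cone_of_mem_cone hex.choose_spec hz]

lemma doubleArea_ne_zero_of_mem_cone {i j : Fin d} (hij : j ≠ i) (hz : z ∈ cone v i) :
    doubleArea (v i) (v j) z ≠ 0 := by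
  rw [doubleArea_rotate]
  exact (hz j hij).ne'

variable [NeZero d]

lemma IsConvexPolygon.doubleArea_pos_of_mem_cone (hd : 1 < d) (hv : IsConvexPolygon v)
    {a k : Fin d} (hz : z ∈ cone v a) (hside : doubleArea (v k) (v (k + 1)) z = 0) :
    0 < doubleArea (v k) (v (k + 1)) (v a) := by
  have hk : k + 1 ≠ k := by
    simpa [Fin.one_eq_zero_iff] using hd.ne'
  have hak : a ≠ k := by
    rintro rfl
    exact doubleArea_ne_zero_of_mem_cone hk hz hside
  have hak' : a ≠ k + 1 := by
    rintro rfl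
    refine doubleArea_ne_zero_of_mem_cone hk.symm hz ?_
    rw [← doubleArea_rotate, doubleArea_swap, hside, neg_zero]
  exact hv k a hak hak'

/-- The polynomial in `λ` giving the signed area spanned by the `k`-th side and the endpoint of an
orbit segment of itinerary `w` that starts on the line through that side. -/
def itineraryPoly {n : ℕ} (v : Fin d → ℂ) (k : Fin d) (w : Fin n → Fin d) : Polynomial ℝ :=
  heightPoly fun m : Fin n => doubleArea (v k) (v (k + 1)) (v (w m))

lemma itineraryPoly_ne_zero {n : ℕ} {k : Fin d} {w : Fin (n + 1) → Fin d}
    (hw : doubleArea (v k) (v (k + 1)) (v (w 0)) ≠ 0) : itineraryPoly v k w ≠ 0 :=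
  heightPoly_ne_zero (c := fun m => doubleArea (v k) (v (k + 1)) (v (w m))) hw

lemma isRoot_itineraryPoly {n : ℕ} {k : Fin d} {w : Fin n → Fin d}
    (horbit : ∀ m : Fin n, (billiardMap v lam)^[m] z ∈ cone v (w m))
    (hstart : doubleArea (v k) (v (k + 1)) z = 0)
    (hend : doubleArea (v k) (v (k + 1)) ((billiardMap v lam)^[n] z) = 0) :
    (itineraryPoly v k w).IsRoot lam := by
  refine (eval_heightPoly_of_recurrence
    (y := fun m => doubleArea (v k) (v (k + 1)) ((billiardMap v lam)^[m] z)) hstart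
    fun m => ?_).trans hend
  rw [Function.iterate_succ_apply', billiardMap_of_mem_cone (horbit m), doubleArea_affine]

/-- The parameters `(v, λ)` for which the root condition holds for the itinerary `w` starting on the
line through the `k`-th side. The first clause, that the vertex `w 0` is off this line, makes
`itineraryPoly v k w` nonzero. -/
def connectionLocus {n : ℕ} (k : Fin d) (w : Fin (n + 1) → Fin d) : Set ((Fin d → ℂ) × ℝ) :=
  {q | doubleArea (q.1 k) (q.1 (k + 1)) (q.1 (w 0)) ≠ 0 ∧ (itineraryPoly q.1 k w).IsRoot q.2}

lemma volume_connectionLocus {n : ℕ} (k : Fin d) (w : Fin (n + 1) → Fin d) :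
    volume (connectionLocus k w) = 0 := by
  have hmeas : Measurable fun q : (Fin d → ℂ) × ℝ => (itineraryPoly q.1 k w).eval q.2 := by
    simp only [itineraryPoly, eval_heightPoly]
    exact Continuous.measurable (by fun_prop)
  have hopen : IsOpen {v : Fin d → ℂ | doubleArea (v k) (v (k + 1)) (v (w 0)) ≠ 0} :=
    isOpen_ne_fun (by fun_prop) continuous_const
  exact measure_prod_setOf_isRoot_eq_zero (p := fun v => itineraryPoly v k w) hopen.measurableSet
    (fun _ => itineraryPoly_ne_zero) hmeas

lemma HasSingularConnection.exists_mem_connectionLocus (hd : 1 < d) (hv : IsConvexPolygon v)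
    (h : HasSingularConnection v lam) :
    ∃ (n : ℕ) (k : Fin d) (w : Fin (n + 1) → Fin d), (v, lam) ∈ connectionLocus k w := by
  obtain ⟨n, hn, x, horbit, -, k, hside⟩ := h
  obtain ⟨n, rfl⟩ := Nat.exists_eq_add_of_le' hn
  have hk := hside (left_mem_segment ℝ _ _)
  have hk' := hside (right_mem_segment ℝ _ _)
  have hstart := doubleArea_eq_zero_of_mem_segment hk hk'
  rw [segment_symm] at hk hk'
  have hend := doubleArea_eq_zero_of_mem_segment hk hk'
  choose w hw using fun m : Fin (n + 1) => mem_iUnion.1 (horbit m m.isLt)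
  exact ⟨n, k, w, (hv.doubleArea_pos_of_mem_cone hd (hw 0) hstart).ne',
    isRoot_itineraryPoly hw hstart hend⟩

end OuterBilliard

theorem singular_connection_measure_zero_general {d : ℕ} [NeZero d] (hd : 3 ≤ d) :
    volume {q : (Fin d → ℂ) × ℝ | IsConvexPolygon q.1 ∧ HasSingularConnection q.1 q.2} = 0 := by
  have hnull : volume (⋃ (n : ℕ) (k : Fin d) (w : Fin (n + 1) → Fin d), connectionLocus k w) = 0 :=
    measure_iUnion_null fun n => measure_iUnion_null fun k => measure_iUnion_null fun w =>
      volume_connectionLocus k w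
  refine measure_mono_null ?_ hnull
  rintro ⟨v, lam⟩ ⟨hv, hconn⟩
  simpa only [mem_iUnion] using hconn.exists_mem_connectionLocus (by omega) hv

/-- The set of pairs `(P, λ) ∈ 𝒫_d × (0,1)` for which `T_{P,λ}` has a singular
connection (of some order `n ≥ 2`) has Lebesgue measure zero. -/
theorem singular_connection_measure_zero (d : ℕ) [NeZero d] (hd : 3 ≤ d) :
    volume {q : (Fin d → ℂ) × ℝ | IsConvexPolygon q.1 ∧ q.2 ∈ Set.Ioo (0 : ℝ) 1 ∧
      HasSingularConnection q.1 q.2} = 0 := by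
  refine measure_mono_null ?_ (singular_connection_measure_zero_general hd)
  exact fun _ hq => ⟨hq.1, hq.2.2⟩
end
end

section
/- For every α > 0 and every integer k ≥ 0, r_α(k) ≥ (1 + 1/(k+1))^{−1/2} · (α²(k+1) + 1)^{−1/(2(k+1))}. -/
open MeasureTheory Set Filter

noncomputable section

/-- The coefficient sequence `a` defines a power series in the class `F_α`:
`p(x) = 1 + ∑_{n ≥ 1} a_n xⁿ` with all coefficients `a_n ∈ [-α, α]`. -/
def memF (α : ℝ) (a : ℕ → ℝ) : Prop :=
  a 0 = 1 ∧ ∀ n : ℕ, 1 ≤ n → |a n| ≤ α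

/-- The function on `(-1,1)` defined by the power series with coefficients `a`. -/
def Fsum (a : ℕ → ℝ) (x : ℝ) : ℝ := ∑' n : ℕ, a n * x ^ n

/-- `r_α(k) = inf {x > 0 : ∃ p ∈ F_α, p⁽ʲ⁾(x) = 0 for j = 0, …, k}`. -/
def rAlpha (α : ℝ) (k : ℕ) : ℝ :=
  sInf {x : ℝ | 0 < x ∧ x < 1 ∧
    ∃ a : ℕ → ℝ, memF α a ∧ ∀ j : ℕ, j ≤ k → iteratedDeriv j (Fsum a) x = 0}

/-!
The bound is an `H²` form of Jensen's inequality. If `p` has bounded coefficients and a zero of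
order `m` at `x`, then `p = (X - x) ^ m * q` with `q` again of bounded coefficients. Put `X ↦ ρ X`
with `|ρ| < 1`, so that all series lie in `H²`. On the unit circle `|ρ z - x| = |x z - ρ|` (here for
real `ρ` and `x`), so replacing `(ρ X - x) ^ m` by `(x X - ρ) ^ m` preserves the `H²` norm, while
the absolute value of the constant coefficient changes from `|x| ^ m * |q 0|` to `|ρ| ^ m * |q 0|`.
The constant coefficient being at most the norm, this gives
`ρ ^ (2 * m) * p(0) ^ 2 ≤ x ^ (2 * m) * ∑ a n ^ 2 * ρ ^ (2 * n)`.
For `p ∈ F_α` the sum is at most `1 + α ^ 2 * ρ ^ 2 / (1 - ρ ^ 2)`, and with `m = k + 1` one takes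
`ρ ^ 2 = m / (m + 1)`.

Since `sInf ∅ = 0`, the set defining `r_α(k)` must also be shown to be nonempty: the average of
`(1 - X ^ (N ^ t)) ^ m` over many `t` has a zero of order `m` at `1` and small nonconstant
coefficients, and a slight dilation moves the zero into the open unit interval.
-/

open Topology ComplexConjugate

section HardyNorm

open PowerSeries

variable {𝕜 : Type*} [NormedField 𝕜] {p q : 𝕜⟦X⟧}

/-- The squared norm of the Hardy space `H²` of the unit disc, in terms of the Taylor coefficients.
The value is meaningful only under `SqSummable`. -/
def hardyNormSq (p : 𝕜⟦X⟧) : ℝ := ∑' n, ‖p.coeff n‖ ^ 2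

/-- Membership in the Hardy space `H²` of the unit disc, in terms of the Taylor coefficients. -/
def SqSummable (p : 𝕜⟦X⟧) : Prop := Summable fun n => ‖p.coeff n‖ ^ 2

lemma SqSummable.sub (hp : SqSummable p) (hq : SqSummable q) : SqSummable (p - q) := by
  refine ((hp.add hq).mul_left 2).of_nonneg_of_le (fun n => by positivity) fun n => ?_
  calc ‖(p - q).coeff n‖ ^ 2 ≤ (‖p.coeff n‖ + ‖q.coeff n‖) ^ 2 := by
        rw [map_sub]; gcongr; exact norm_sub_le _ _
    _ ≤ 2 * (‖p.coeff n‖ ^ 2 + ‖q.coeff n‖ ^ 2) := add_sq_le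

lemma SqSummable.C_mul (hp : SqSummable p) (c : 𝕜) : SqSummable (C c * p) := by
  simpa only [SqSummable, coeff_C_mul, norm_mul, mul_pow] using Summable.mul_left (‖c‖ ^ 2) hp

lemma SqSummable.X_mul (hp : SqSummable p) : SqSummable (X * p) :=
  (summable_nat_add_iff 1).1 <| by simpa only [coeff_succ_X_mul, SqSummable] using hp

lemma hardyNormSq_X_mul (hp : SqSummable p) : hardyNormSq (X * p) = hardyNormSq p := by
  rw [hardyNormSq, Summable.tsum_eq_zero_add hp.X_mul]
  simp [coeff_succ_X_mul, hardyNormSq]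

lemma SqSummable.norm_constantCoeff_sq_le (hp : SqSummable p) :
    ‖p.constantCoeff‖ ^ 2 ≤ hardyNormSq p := by
  simpa [hardyNormSq] using hp.le_tsum 0 fun n _ => sq_nonneg ‖p.coeff n‖

lemma SqSummable.linear_mul (hq : SqSummable q) (a b : 𝕜) : SqSummable ((C a * X - C b) * q) := by
  rw [sub_mul, mul_assoc]
  exact (hq.X_mul.C_mul a).sub (hq.C_mul b)

lemma SqSummable.linear_pow_mul (hq : SqSummable q) (a b : 𝕜) (m : ℕ) :
    SqSummable ((C a * X - C b) ^ m * q) := by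
  induction m with
  | zero => simpa using hq
  | succ m ih => rw [pow_succ', mul_assoc]; exact ih.linear_mul a b

end HardyNorm

section BlaschkeReflection

open PowerSeries

variable {𝕜 : Type*} [RCLike 𝕜] {q : 𝕜⟦X⟧}

lemma norm_mul_sub_mul_sq (a b x y : 𝕜) :
    ‖a * x - b * y‖ ^ 2 =
      ‖conj b * x - conj a * y‖ ^ 2 + (‖a‖ ^ 2 - ‖b‖ ^ 2) * (‖x‖ ^ 2 - ‖y‖ ^ 2) := by
  have hre : RCLike.re (inner 𝕜 (a * x) (b * y)) =
      RCLike.re (inner 𝕜 (conj b * x) (conj a * y)) := by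
    simp only [RCLike.inner_apply, map_mul, RCLike.conj_conj]
    congr 1
    ring
  rw [norm_sub_sq (𝕜 := 𝕜), norm_sub_sq (𝕜 := 𝕜), hre]
  simp only [norm_mul, RCLike.norm_conj]
  ring

-- The quotient of the two factors is unimodular on the unit circle (a Blaschke factor).
lemma hardyNormSq_linear_mul (hq : SqSummable q) (a b : 𝕜) :
    hardyNormSq ((C a * X - C b) * q) = hardyNormSq ((C (conj b) * X - C (conj a)) * q) := by
  have hcoeff (n : ℕ) : ‖((C a * X - C b) * q).coeff n‖ ^ 2 =
      ‖((C (conj b) * X - C (conj a)) * q).coeff n‖ ^ 2 +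
        (‖a‖ ^ 2 - ‖b‖ ^ 2) * (‖(X * q).coeff n‖ ^ 2 - ‖q.coeff n‖ ^ 2) := by
    simp only [sub_mul _ _ q, mul_assoc, map_sub, coeff_C_mul]
    exact norm_mul_sub_mul_sq a b _ _
  have hshift : ∑' n, (‖(X * q).coeff n‖ ^ 2 - ‖q.coeff n‖ ^ 2) = 0 := by
    rw [Summable.tsum_sub hq.X_mul hq, sub_eq_zero]
    exact hardyNormSq_X_mul hq
  rw [hardyNormSq, tsum_congr hcoeff, Summable.tsum_add (hq.linear_mul _ _)
    (Summable.mul_left _ (Summable.sub hq.X_mul hq)), tsum_mul_left, hshift, mul_zero, add_zero,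
    hardyNormSq]

lemma hardyNormSq_linear_pow_mul (hq : SqSummable q) (a b : 𝕜) (m : ℕ) :
    hardyNormSq ((C a * X - C b) ^ m * q) =
      hardyNormSq ((C (conj b) * X - C (conj a)) ^ m * q) := by
  induction m generalizing q with
  | zero => simp
  | succ m ih =>
    calc hardyNormSq ((C a * X - C b) ^ (m + 1) * q)
        = hardyNormSq ((C a * X - C b) * ((C a * X - C b) ^ m * q)) := by
          rw [pow_succ', mul_assoc]
      _ = hardyNormSq ((C a * X - C b) ^ m * ((C (conj b) * X - C (conj a)) * q)) := by
          rw [hardyNormSq_linear_mul (hq.linear_pow_mul a b m), mul_left_comm]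
      _ = hardyNormSq ((C (conj b) * X - C (conj a)) ^ (m + 1) * q) := by
          rw [ih (hq.linear_mul _ _), pow_succ, mul_assoc]

lemma norm_constantCoeff_linear_pow_mul_le (hq : SqSummable q) (a b : 𝕜) (m : ℕ) :
    (‖a‖ ^ m * ‖((C a * X - C b) ^ m * q).constantCoeff‖) ^ 2 ≤
      (‖b‖ ^ m) ^ 2 * hardyNormSq ((C a * X - C b) ^ m * q) := by
  calc (‖a‖ ^ m * ‖((C a * X - C b) ^ m * q).constantCoeff‖) ^ 2
      = (‖b‖ ^ m) ^ 2 * ‖((C (conj b) * X - C (conj a)) ^ m * q).constantCoeff‖ ^ 2 := by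
        simp only [map_mul, map_pow, map_sub, constantCoeff_C, constantCoeff_X, mul_zero, zero_sub,
          norm_mul, norm_pow, norm_neg, RCLike.norm_conj]
        ring
    _ ≤ (‖b‖ ^ m) ^ 2 * hardyNormSq ((C a * X - C b) ^ m * q) := by
        rw [hardyNormSq_linear_pow_mul hq]
        gcongr
        exact (hq.linear_pow_mul _ _ m).norm_constantCoeff_sq_le

end BlaschkeReflection

section Division

open PowerSeries

variable {𝕜 : Type*} [NormedField 𝕜]

/-- Boundedness of the coefficients of a power series, a condition under which it converges on the
open unit disc. -/
def BoundedCoeff (p : 𝕜⟦X⟧) : Prop := ∃ B, ∀ n, ‖p.coeff n‖ ≤ B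

/-- The function defined by a power series; it takes the value `0` wherever the series is not
summable. -/
def powerSeriesSum (p : 𝕜⟦X⟧) (x : 𝕜) : 𝕜 := ∑' n, p.coeff n * x ^ n

variable {p q : 𝕜⟦X⟧} {w x z : 𝕜}

lemma BoundedCoeff.X_mul (hp : BoundedCoeff p) : BoundedCoeff (X * p) := by
  obtain ⟨B, hB⟩ := hp
  refine ⟨B, fun n => ?_⟩
  cases n with
  | zero => simpa using (norm_nonneg _).trans (hB 0)
  | succ n => simpa only [coeff_succ_X_mul] using hB n

lemma BoundedCoeff.sqSummable_rescale (hp : BoundedCoeff p) (hw : ‖w‖ < 1) :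
    SqSummable (rescale w p) := by
  obtain ⟨B, hB⟩ := hp
  have hgeom : Summable fun n : ℕ => B ^ 2 * (‖w‖ ^ 2) ^ n :=
    (summable_geometric_of_lt_one (sq_nonneg _)
      (pow_lt_one₀ (norm_nonneg w) hw two_ne_zero)).mul_left _
  refine hgeom.of_nonneg_of_le (fun n => by positivity) fun n => ?_
  rw [coeff_rescale, norm_mul, norm_pow, mul_pow, mul_comm, pow_right_comm]
  gcongr
  exact hB n

variable [CompleteSpace 𝕜]

lemma BoundedCoeff.summable (hp : BoundedCoeff p) (hx : ‖x‖ < 1) :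
    Summable fun n => p.coeff n * x ^ n := by
  obtain ⟨B, hB⟩ := hp
  refine .of_norm_bounded ((summable_geometric_of_lt_one (norm_nonneg x) hx).mul_left B) fun n => ?_
  rw [norm_mul, norm_pow]
  gcongr
  exact hB n

lemma powerSeriesSum_X_sub_C_mul (hq : BoundedCoeff q) (hx : ‖x‖ < 1) (z : 𝕜) :
    powerSeriesSum ((X - C z) * q) x = (x - z) * powerSeriesSum q x := by
  have hX : powerSeriesSum (X * q) x = x * powerSeriesSum q x := by
    rw [powerSeriesSum, (hq.X_mul.summable hx).tsum_eq_zero_add, powerSeriesSum, ← tsum_mul_left]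
    simp only [coeff_zero_X_mul, zero_mul, zero_add, coeff_succ_X_mul]
    exact tsum_congr fun n => by ring
  rw [sub_mul x, ← hX]
  simp only [powerSeriesSum, ← tsum_mul_left]
  rw [← (hq.X_mul.summable hx).tsum_sub ((hq.summable hx).mul_left z)]
  refine tsum_congr fun n => ?_
  rw [sub_mul, map_sub, coeff_C_mul]
  ring

lemma BoundedCoeff.exists_eq_X_sub_C_mul (hp : BoundedCoeff p) (hz : ‖z‖ < 1)
    (hpz : powerSeriesSum p z = 0) : ∃ q, BoundedCoeff q ∧ p = (X - C z) * q := by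
  obtain ⟨B, hB⟩ := hp
  set tail : ℕ → 𝕜 := fun n => ∑' j, p.coeff (n + j) * z ^ j
  have hnorm (n j : ℕ) : ‖p.coeff (n + j) * z ^ j‖ ≤ B * ‖z‖ ^ j := by
    rw [norm_mul, norm_pow]
    gcongr
    exact hB _
  have hgeom : HasSum (fun j => B * ‖z‖ ^ j) (B * (1 - ‖z‖)⁻¹) :=
    (hasSum_geometric_of_lt_one (norm_nonneg z) hz).mul_left B
  have htail (n : ℕ) : tail n = p.coeff n + z * tail (n + 1) := by
    simp only [tail]
    rw [(Summable.of_norm_bounded hgeom.summable (hnorm n)).tsum_eq_zero_add, ← tsum_mul_left]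
    simp only [add_zero, pow_zero, mul_one]
    congr 1
    exact tsum_congr fun j => by rw [add_assoc, add_comm 1 j, pow_succ]; ring
  have htail_zero : tail 0 = 0 := by simpa [tail, powerSeriesSum] using hpz
  refine ⟨mk fun n => tail (n + 1), ⟨B * (1 - ‖z‖)⁻¹, fun n => ?_⟩, ?_⟩
  · rw [coeff_mk]
    exact tsum_of_norm_bounded hgeom (hnorm (n + 1))
  · ext n
    rw [sub_mul, map_sub, coeff_C_mul, coeff_mk, eq_sub_iff_add_eq, ← htail n]
    cases n with
    | zero => rw [coeff_zero_X_mul, htail_zero]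
    | succ n => rw [coeff_succ_X_mul, coeff_mk]

end Division

section AnalyticOrder

open PowerSeries

variable {𝕜 : Type*} [NontriviallyNormedField 𝕜] {p q : 𝕜⟦X⟧} {x z : 𝕜}

lemma powerSeriesSum_eq_ofScalars_sum (p : 𝕜⟦X⟧) :
    powerSeriesSum p = (FormalMultilinearSeries.ofScalars 𝕜 fun n => p.coeff n).sum := by
  ext x
  simp [powerSeriesSum, FormalMultilinearSeries.sum, mul_comm]

variable [CompleteSpace 𝕜]

lemma BoundedCoeff.analyticAt (hp : BoundedCoeff p) (hx : ‖x‖ < 1) :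
    AnalyticAt 𝕜 (powerSeriesSum p) x := by
  obtain ⟨B, hB⟩ := hp
  set F := FormalMultilinearSeries.ofScalars 𝕜 fun n => p.coeff n
  have hrad : 1 ≤ F.radius := by
    simpa using F.le_radius_of_bound B (r := 1) fun n => by simpa [F] using hB n
  rw [powerSeriesSum_eq_ofScalars_sum]
  refine (F.hasFPowerSeriesOnBall (one_pos.trans_le hrad)).analyticAt_of_mem
    (Metric.eball_subset_eball hrad ?_)
  rw [Metric.mem_eball, edist_zero_right, ← ofReal_norm]
  exact ENNReal.ofReal_lt_one.2 hx

lemma analyticOrderAt_powerSeriesSum_X_sub_C_mul (hq : BoundedCoeff q) (hz : ‖z‖ < 1) :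
    analyticOrderAt (powerSeriesSum ((X - C z) * q)) z =
      1 + analyticOrderAt (powerSeriesSum q) z := by
  have hdisc : ∀ᶠ x in 𝓝 z, ‖x‖ < 1 := continuous_norm.continuousAt.eventually_lt_const hz
  have hmul : powerSeriesSum ((X - C z) * q) =ᶠ[𝓝 z] (fun x => x - z) * powerSeriesSum q := by
    filter_upwards [hdisc] with x hx using powerSeriesSum_X_sub_C_mul hq hx z
  rw [analyticOrderAt_congr hmul, analyticOrderAt_mul (by fun_prop) (hq.analyticAt hz),
    analyticOrderAt_id_sub_const_self]

theorem BoundedCoeff.exists_eq_X_sub_C_pow_mul (hp : BoundedCoeff p) (hz : ‖z‖ < 1) {m : ℕ}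
    (hm : m ≤ analyticOrderAt (powerSeriesSum p) z) :
    ∃ q, BoundedCoeff q ∧ p = (X - C z) ^ m * q := by
  induction m generalizing p with
  | zero => exact ⟨p, hp, by simp⟩
  | succ m ih =>
    have hpz : powerSeriesSum p z = 0 :=
      apply_eq_zero_of_analyticOrderAt_ne_zero fun h => by simp [h] at hm
    obtain ⟨p', hp', rfl⟩ := hp.exists_eq_X_sub_C_mul hz hpz
    rw [analyticOrderAt_powerSeriesSum_X_sub_C_mul hp' hz, add_comm 1, Nat.cast_succ,
      ENat.add_le_add_iff_right ENat.one_ne_top] at hm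
    obtain ⟨q, hq, rfl⟩ := ih hp' hm
    exact ⟨q, hq, by ring⟩

end AnalyticOrder

section Jensen

open PowerSeries

variable {𝕜 : Type*} [RCLike 𝕜] {p : 𝕜⟦X⟧} {w z : 𝕜}

/-- An `L²` form of Jensen's inequality on the circle of radius `‖w‖`. -/
theorem BoundedCoeff.norm_constantCoeff_le_of_le_analyticOrderAt (hp : BoundedCoeff p)
    (hz : ‖z‖ < 1) (hw : ‖w‖ < 1) {m : ℕ} (hm : m ≤ analyticOrderAt (powerSeriesSum p) z) :
    (‖w‖ ^ m * ‖p.constantCoeff‖) ^ 2 ≤ (‖z‖ ^ m) ^ 2 * hardyNormSq (rescale w p) := by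
  obtain ⟨q, hq, rfl⟩ := hp.exists_eq_X_sub_C_pow_mul hz hm
  have hrescale : rescale w ((X - C z) ^ m * q) = (C w * X - C z) ^ m * rescale w q := by
    have hC : rescale w (C z) = C z := by ext n; cases n <;> simp [coeff_rescale, coeff_C]
    rw [map_mul, map_pow, map_sub, rescale_X, hC]
  have hconst : ((X - C z) ^ m * q).constantCoeff =
      (rescale w ((X - C z) ^ m * q)).constantCoeff := by
    rw [← coeff_zero_eq_constantCoeff_apply, ← coeff_zero_eq_constantCoeff_apply, coeff_rescale,
      pow_zero, one_mul]
  rw [hconst, hrescale]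
  exact norm_constantCoeff_linear_pow_mul_le (hq.sqSummable_rescale hw) w z m

end Jensen

section FlatPolynomials

open Polynomial

lemma coeff_expand_pow_eq_zero {R : Type*} [CommSemiring R] {P : R[X]} {N : ℕ}
    (hN : P.natDegree < N) {n t : ℕ} (hn : n ≠ 0) (ht : t ≠ Nat.log N n) :
    (expand R (N ^ t) P).coeff n = 0 := by
  have hpos : 0 < N ^ t := pow_pos (Nat.zero_lt_of_lt hN) t
  rw [coeff_expand hpos]
  split_ifs with hdvd
  · obtain ⟨d, rfl⟩ := hdvd
    rw [Nat.mul_div_cancel_left d hpos]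
    refine coeff_eq_zero_of_natDegree_lt (hN.trans_le ?_)
    by_contra! hd
    refine ht (Nat.log_eq_of_pow_le_of_lt_pow ?_ ?_).symm
    · exact Nat.le_mul_of_pos_right _ (Nat.pos_of_ne_zero (right_ne_zero_of_mul hn))
    · rw [pow_succ]
      gcongr
  · rfl

-- Away from `0`, distinct summands have disjoint supports.
lemma abs_coeff_sum_expand_pow_le {P : ℝ[X]} {N : ℕ} (hN : P.natDegree < N) {B : ℝ}
    (hB : ∀ n, |P.coeff n| ≤ B) (T : Finset ℕ) {n : ℕ} (hn : n ≠ 0) :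
    |(∑ t ∈ T, expand ℝ (N ^ t) P).coeff n| ≤ B := by
  have hB0 : 0 ≤ B := (abs_nonneg _).trans (hB 0)
  rw [finsetSum_coeff]
  by_cases hlog : Nat.log N n ∈ T
  · rw [Finset.sum_eq_single_of_mem _ hlog fun t _ ht => coeff_expand_pow_eq_zero hN hn ht,
      coeff_expand (pow_pos (Nat.zero_lt_of_lt hN) _)]
    split_ifs
    · exact hB _
    · simpa using hB0
  · rw [Finset.sum_eq_zero fun t ht =>
      coeff_expand_pow_eq_zero hN hn (ne_of_mem_of_not_mem ht hlog)]
    simpa using hB0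

theorem exists_polynomial_abs_coeff_lt {ε : ℝ} (hε : 0 < ε) (m : ℕ) :
    ∃ P : ℝ[X], P.coeff 0 = 1 ∧ (∀ n ≠ 0, |P.coeff n| < ε) ∧ (X - 1) ^ m ∣ P := by
  set Q : ℝ[X] := (1 - X) ^ m
  have hQ0 : Q.coeff 0 = 1 := by simp [Q, coeff_zero_eq_eval_zero]
  set N := Q.natDegree + 1
  have hN : Q.natDegree < N := Nat.lt_succ_self _
  obtain ⟨B, hB⟩ : ∃ B, ∀ n, |Q.coeff n| ≤ B := by
    refine ⟨∑ i ∈ Q.support, |Q.coeff i|, fun n => ?_⟩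
    by_cases hn : n ∈ Q.support
    · exact Finset.single_le_sum (f := fun i => |Q.coeff i|) (fun i _ => abs_nonneg _) hn
    · rw [notMem_support_iff.1 hn, abs_zero]
      positivity
  obtain ⟨T, hT⟩ := exists_nat_gt (B / ε)
  have hT0 : (0 : ℝ) < T := (div_nonneg ((abs_nonneg _).trans (hB 0)) hε.le).trans_lt hT
  refine ⟨C (T : ℝ)⁻¹ * ∑ t ∈ Finset.range T, expand ℝ (N ^ t) Q, ?_, fun n hn => ?_, ?_⟩
  · have hconst (t : ℕ) : (expand ℝ (N ^ t) Q).coeff 0 = 1 := by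
      rw [coeff_expand (by positivity), if_pos (dvd_zero _), Nat.zero_div, hQ0]
    simp only [coeff_C_mul, finsetSum_coeff, hconst]
    simp [hT0.ne']
  · rw [coeff_C_mul, abs_mul, abs_of_pos (inv_pos.2 hT0), inv_mul_lt_iff₀ hT0]
    exact (abs_coeff_sum_expand_pow_le hN hB _ hn).trans_lt ((div_lt_iff₀ hε).1 hT)
  · refine (Finset.dvd_sum fun t _ => ?_).mul_left _
    have hexpand : expand ℝ (N ^ t) Q = (1 - X ^ N ^ t) ^ m := by simp [Q]
    rw [hexpand]
    exact pow_dvd_pow_of_dvd (dvd_sub_comm.1 (sub_one_dvd_pow_sub_one X _)) m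

lemma iteratedDeriv_eval {𝕜 : Type*} [NontriviallyNormedField 𝕜] (P : 𝕜[X]) (j : ℕ) :
    iteratedDeriv j (fun x => P.eval x) = fun x => (derivative^[j] P).eval x := by
  induction j with
  | zero => exact iteratedDeriv_zero
  | succ j ih =>
    rw [iteratedDeriv_succ, ih, Function.iterate_succ_apply']
    exact funext fun x => Polynomial.deriv _

lemma iteratedDeriv_eval_eq_zero_of_pow_dvd {𝕜 : Type*} [NontriviallyNormedField 𝕜]
    {P u : 𝕜[X]} {x : 𝕜} {m j : ℕ} (hu : u.IsRoot x) (hP : u ^ m ∣ P) (hj : j < m) :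
    iteratedDeriv j (fun y => P.eval y) x = 0 := by
  rw [iteratedDeriv_eval]
  refine hu.dvd ((dvd_pow_self u (Nat.sub_ne_zero_of_lt hj)).trans ?_)
  exact pow_sub_dvd_iterate_derivative_of_pow_dvd j hP

lemma Fsum_coeff (P : ℝ[X]) : Fsum P.coeff = fun x => P.eval x := by
  ext x
  rw [Fsum, eval_eq_sum_range]
  refine tsum_eq_sum fun n hn => ?_
  rw [coeff_eq_zero_of_natDegree_lt (by simpa using hn), zero_mul]

theorem exists_memF_iteratedDeriv_eq_zero {α : ℝ} (hα : 0 < α) (k : ℕ) :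
    ∃ x : ℝ, 0 < x ∧ x < 1 ∧
      ∃ a, memF α a ∧ ∀ j ≤ k, iteratedDeriv j (Fsum a) x = 0 := by
  obtain ⟨P, hP0, hPα, hPdvd⟩ := exists_polynomial_abs_coeff_lt hα (k + 1)
  have hdilate : ∀ᶠ r : ℝ in 𝓝[<] 1, ∀ n ∈ P.support \ {0}, |P.coeff n * r⁻¹ ^ n| < α := by
    refine nhdsWithin_le_nhds ((Finset.eventually_all _).2 fun n hn => ?_)
    have hcont : ContinuousAt (fun r : ℝ => |P.coeff n * r⁻¹ ^ n|) 1 := by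
      fun_prop (disch := norm_num)
    refine hcont.eventually_lt_const ?_
    simpa using hPα n (by simpa using (Finset.mem_sdiff.1 hn).2)
  obtain ⟨r, hr, hr0, hr1⟩ := (hdilate.and (Ioo_mem_nhdsLT one_pos)).exists
  set u : ℝ[X] := C r⁻¹ * X
  have hcoeff (n : ℕ) : (P.comp u).coeff n = P.coeff n * r⁻¹ ^ n := comp_C_mul_X_coeff
  refine ⟨r, hr0, hr1, (P.comp u).coeff, ⟨?_, fun n hn => ?_⟩, fun j hj => ?_⟩
  · rw [hcoeff, hP0, pow_zero, mul_one]
  · rw [hcoeff]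
    by_cases hsupp : n ∈ P.support
    · exact (hr n (Finset.mem_sdiff.2 ⟨hsupp, by simpa using Nat.one_le_iff_ne_zero.1 hn⟩)).le
    · simpa [notMem_support_iff.1 hsupp] using hα.le
  · have hroot : (u - 1).IsRoot r := by simp [u, hr0.ne']
    have hdvd : (u - 1) ^ (k + 1) ∣ P.comp u := by
      simpa using map_dvd (compRingHom u) hPdvd
    rw [Fsum_coeff]
    exact iteratedDeriv_eval_eq_zero_of_pow_dvd hroot hdvd (Nat.lt_succ_of_le hj)

end FlatPolynomials

section ClassF

open PowerSeries

variable {α : ℝ} {a : ℕ → ℝ}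

lemma powerSeriesSum_mk (a : ℕ → ℝ) : powerSeriesSum (mk a) = Fsum a := by
  ext x
  simp [powerSeriesSum, Fsum]

lemma memF.boundedCoeff (ha : memF α a) : BoundedCoeff (mk a) := by
  refine ⟨max 1 α, fun n => ?_⟩
  rw [coeff_mk, Real.norm_eq_abs]
  rcases Nat.eq_zero_or_pos n with rfl | hn
  · simp [ha.1]
  · exact (ha.2 n hn).trans (le_max_right _ _)

lemma memF.hardyNormSq_rescale_le (ha : memF α a) {ρ : ℝ} (hρ : |ρ| < 1) :
    hardyNormSq (rescale ρ (mk a)) ≤ 1 + α ^ 2 * (ρ ^ 2 / (1 - ρ ^ 2)) := by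
  have hsum : SqSummable (rescale ρ (mk a)) := ha.boundedCoeff.sqSummable_rescale hρ
  have hgeom : HasSum (fun n : ℕ => α ^ 2 * (ρ ^ 2 * (ρ ^ 2) ^ n))
      (α ^ 2 * (ρ ^ 2 / (1 - ρ ^ 2))) :=
    ((hasSum_geometric_of_lt_one (sq_nonneg ρ) ((sq_lt_one_iff_abs_lt_one ρ).2 hρ)).mul_left
      (ρ ^ 2)).mul_left (α ^ 2)
  have hterm (n : ℕ) : ‖(rescale ρ (mk a)).coeff (n + 1)‖ ^ 2 ≤ α ^ 2 * (ρ ^ 2 * (ρ ^ 2) ^ n) := by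
    have hsq : a (n + 1) ^ 2 ≤ α ^ 2 := sq_le_sq.2 ((ha.2 _ n.succ_pos).trans (le_abs_self α))
    calc ‖(rescale ρ (mk a)).coeff (n + 1)‖ ^ 2 = a (n + 1) ^ 2 * (ρ ^ 2 * (ρ ^ 2) ^ n) := by
          rw [coeff_rescale, coeff_mk, Real.norm_eq_abs, sq_abs]
          ring
      _ ≤ α ^ 2 * (ρ ^ 2 * (ρ ^ 2) ^ n) := by gcongr
  have htail : ∑' n, ‖(rescale ρ (mk a)).coeff (n + 1)‖ ^ 2 ≤ α ^ 2 * (ρ ^ 2 / (1 - ρ ^ 2)) :=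
    hgeom.tsum_eq ▸ Summable.tsum_le_tsum hterm ((summable_nat_add_iff 1).2 hsum) hgeom.summable
  rw [hardyNormSq, Summable.tsum_eq_zero_add hsum]
  simpa [ha.1] using htail

theorem memF.pow_le_of_iteratedDeriv_eq_zero (ha : memF α a) {x ρ : ℝ} (hx : |x| < 1)
    (hρ : |ρ| < 1) {m : ℕ} (hzero : ∀ j < m, iteratedDeriv j (Fsum a) x = 0) :
    (ρ ^ 2) ^ m ≤ (x ^ 2) ^ m * (1 + α ^ 2 * (ρ ^ 2 / (1 - ρ ^ 2))) := by
  have hp : BoundedCoeff (mk a) := ha.boundedCoeff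
  have horder : m ≤ analyticOrderAt (powerSeriesSum (mk a)) x := by
    rw [natCast_le_analyticOrderAt_iff_iteratedDeriv_eq_zero (hp.analyticAt hx), powerSeriesSum_mk]
    exact hzero
  calc (ρ ^ 2) ^ m = (‖ρ‖ ^ m * ‖(mk a).constantCoeff‖) ^ 2 := by
        rw [← coeff_zero_eq_constantCoeff_apply, coeff_mk, ha.1, norm_one, mul_one,
          pow_right_comm ‖ρ‖, Real.norm_eq_abs, sq_abs]
    _ ≤ (‖x‖ ^ m) ^ 2 * hardyNormSq (rescale ρ (mk a)) :=
        hp.norm_constantCoeff_le_of_le_analyticOrderAt hx hρ horder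
    _ ≤ (x ^ 2) ^ m * (1 + α ^ 2 * (ρ ^ 2 / (1 - ρ ^ 2))) := by
        rw [pow_right_comm, Real.norm_eq_abs, sq_abs]
        gcongr
        exact ha.hardyNormSq_rescale_le hρ

lemma rpow_neg_one_div_natCast_pow {x : ℝ} (hx : 0 ≤ x) {n : ℕ} (hn : n ≠ 0) :
    (x ^ (-(1 / (n : ℝ)))) ^ n = x⁻¹ := by
  rw [one_div, Real.rpow_neg hx, inv_pow, Real.rpow_inv_natCast_pow hx hn]

theorem memF.mul_rpow_le_of_iteratedDeriv_eq_zero (ha : memF α a) {x ρ : ℝ} (hx0 : 0 ≤ x)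
    (hx1 : x < 1) (hρ : |ρ| < 1) {m : ℕ} (hm : m ≠ 0)
    (hzero : ∀ j < m, iteratedDeriv j (Fsum a) x = 0) :
    ρ * (1 + α ^ 2 * (ρ ^ 2 / (1 - ρ ^ 2))) ^ (-(1 / (2 * (m : ℝ)))) ≤ x := by
  set S : ℝ := 1 + α ^ 2 * (ρ ^ 2 / (1 - ρ ^ 2))
  have hS : 0 < S := by
    have : 0 < 1 - ρ ^ 2 := sub_pos.2 ((sq_lt_one_iff_abs_lt_one ρ).2 hρ)
    positivity
  have hroot : (S ^ (-(1 / (2 * (m : ℝ))))) ^ (2 * m) = S⁻¹ := by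
    exact_mod_cast rpow_neg_one_div_natCast_pow hS.le (n := 2 * m) (by positivity)
  refine le_of_pow_le_pow_left₀ (n := 2 * m) (by positivity) hx0 ?_
  rw [mul_pow, hroot, pow_mul, pow_mul, ← div_eq_mul_inv, div_le_iff₀ hS]
  exact ha.pow_le_of_iteratedDeriv_eq_zero (by rwa [abs_of_nonneg hx0]) hρ hzero

end ClassF

/-- Lower bound for `r_α(k)`:
`r_α(k) ≥ (1 + 1/(k+1))^(-1/2) (α²(k+1) + 1)^(-1/(2(k+1)))`. -/
theorem rAlpha_lower_bound (α : ℝ) (hα : 0 < α) (k : ℕ) :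
    (1 + 1 / ((k : ℝ) + 1)) ^ (-(1 / 2) : ℝ) *
        (α ^ 2 * ((k : ℝ) + 1) + 1) ^ (-(1 / (2 * ((k : ℝ) + 1)))) ≤
      rAlpha α k := by
  refine le_csInf (exists_memF_iteratedDeriv_eq_zero hα k) ?_
  rintro x ⟨hx0, hx1, a, ha, hzero⟩
  set m : ℝ := (k : ℝ) + 1
  have hm : 0 < m := by positivity
  set ρ : ℝ := (1 + 1 / m) ^ (-(1 / 2) : ℝ)
  have hρ : ρ ^ 2 = m / (m + 1) := by
    have hinv : ρ ^ 2 = (1 + 1 / m)⁻¹ :=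
      mod_cast rpow_neg_one_div_natCast_pow (x := 1 + 1 / m) (by positivity) two_ne_zero
    rw [hinv]
    field_simp
  have hρ1 : |ρ| < 1 := by
    rw [← sq_lt_one_iff_abs_lt_one, hρ, div_lt_one (by positivity)]
    exact lt_add_one m
  have hratio : ρ ^ 2 / (1 - ρ ^ 2) = m := by
    rw [hρ]
    field_simp
    ring
  have hbound := ha.mul_rpow_le_of_iteratedDeriv_eq_zero hx0.le hx1 hρ1 k.succ_ne_zero
    fun j hj => hzero j (Nat.lt_succ_iff.1 hj)
  rwa [hratio, add_comm 1, Nat.cast_succ] at hbound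
end
end

section
/- For every α > 0 and every integer k ≥ 0, r_α(k) ≤ (1 − 1/(k+2))^{min{α/9, 1}}. -/
open MeasureTheory Set Filter

noncomputable section

/-!
Let `b(z) = (r - z) / (1 - r z)` be the Blaschke factor with zero `r ∈ (0, 1)`. The function
`f = (b / r) ^ (k + 1)` satisfies `f(0) = 1`, vanishes to order `k + 1` at `r`, and has modulus
`r ^ (-(k + 1))` on the unit circle. Carathéodory's coefficient inequality says that if `Re f ≤ M`
on the unit circle, then every Taylor coefficient of positive index is at most `2 (M - Re f(0))` in
modulus. Hence `f ∈ F_α` as soon as `r ^ (-(k + 1)) ≤ 1 + α / 2`, and the extremal choice of `r`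
gives `r_α(k) ≤ (1 + α / 2) ^ (-1 / (k + 1))`. The stated bound follows from
`exp (-1 / (k + 1)) ≤ 1 - 1 / (k + 2)` and `min {α / 9, 1} ≤ log (1 + α / 2)`.
-/

section Caratheodory

open Complex Metric Real
open scoped ComplexConjugate Nat

variable {E : Type*} [NormedAddCommGroup E] [NormedSpace ℂ E] {c : ℂ} {R : ℝ} {n : ℕ}

theorem norm_circleAverage_le_circleAverage_norm {F : Type*} [NormedAddCommGroup F]
    [NormedSpace ℝ F] (f : ℂ → F) (c : ℂ) (R : ℝ) :
    ‖circleAverage f c R‖ ≤ circleAverage (‖f ·‖) c R := by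
  rw [circleAverage, circleAverage, norm_smul, smul_eq_mul, Real.norm_of_nonneg (by positivity)]
  gcongr
  exact intervalIntegral.norm_integral_le_integral_norm (by positivity)

theorem circleAverage_inv_sub_pow_smul [CompleteSpace E] {f : ℂ → E} (hR : 0 < R)
    (hf : DiffContOnCl ℂ f (ball c R)) (n : ℕ) :
    circleAverage (fun z ↦ ((z - c) ^ n)⁻¹ • f z) c R = (n ! : ℂ)⁻¹ • iteratedDeriv n f c := by
  calc circleAverage (fun z ↦ ((z - c) ^ n)⁻¹ • f z) c R
      = (2 * π * I)⁻¹ • ∮ z in C(c, R), (1 / (z - c) ^ (n + 1)) • f z := by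
        simp only [circleAverage_eq_circleIntegral hR.ne', smul_smul, one_div, pow_succ', mul_inv]
    _ = (n ! : ℂ)⁻¹ • iteratedDeriv n f c := by
        rw [hf.circleIntegral_one_div_sub_center_pow_smul hR, smul_smul, ← mul_div_assoc,
          inv_mul_cancel₀ two_pi_I_ne_zero, one_div]

theorem circleAverage_sub_pow_smul_eq_zero [CompleteSpace E] {f : ℂ → E}
    (hf : DiffContOnCl ℂ f (ball c |R|)) (hn : n ≠ 0) :
    circleAverage (fun z ↦ (z - c) ^ n • f z) c R = 0 := by
  have hprod : DiffContOnCl ℂ (fun z ↦ (z - c) ^ n • f z) (ball c |R|) :=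
    DiffContOnCl.smul (Differentiable.diffContOnCl (by fun_prop)) hf
  simp [hprod.circleAverage, hn]

theorem circleAverage_conj {f : ℂ → ℂ} (hf : CircleIntegrable f c R) :
    circleAverage (fun z ↦ conj (f z)) c R = conj (circleAverage f c R) :=
  conjCLE.toContinuousLinearMap.circleAverage_comp_comm hf

theorem circleAverage_re {f : ℂ → ℂ} (hf : CircleIntegrable f c R) :
    circleAverage (fun z ↦ (f z).re) c R = (circleAverage f c R).re :=
  reCLM.circleAverage_comp_comm hf

theorem circleAverage_inv_sub_pow_mul_conj_eq_zero {f : ℂ → ℂ} (hR : 0 < R)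
    (hf : DiffContOnCl ℂ f (ball c R)) (hn : n ≠ 0) :
    circleAverage (fun z ↦ ((z - c) ^ n)⁻¹ * conj (f z)) c R = 0 := by
  have hpow : ContinuousOn (fun z ↦ (z - c) ^ n) (sphere c R) := by fun_prop
  have hcont : ContinuousOn f (sphere c R) := hf.continuousOn_ball.mono sphere_subset_closedBall
  have hint : CircleIntegrable (fun z ↦ (z - c) ^ n • f z) c R :=
    (hpow.smul hcont).circleIntegrable hR.le
  -- On the circle `(z - c)⁻¹ = conj (z - c) / R ^ 2`, so up to conjugation this averages an
  -- analytic function vanishing at `c`.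
  have hconj : EqOn (fun z ↦ ((z - c) ^ n)⁻¹ * conj (f z))
      (fun z ↦ ((R : ℂ) ^ (2 * n))⁻¹ • conj ((z - c) ^ n • f z)) (sphere c |R|) := by
    intro z hz
    have hnorm : (R : ℂ) ^ 2 = (z - c) * conj (z - c) := by
      rw [mul_conj', mem_sphere_iff_norm.1 hz, abs_of_pos hR]
    have hne : conj (z - c) ≠ 0 := fun h ↦ by simp [h, hR.ne'] at hnorm
    simp only [pow_mul, hnorm, smul_eq_mul, map_mul, map_pow, mul_pow, mul_inv]
    field_simp
  rw [circleAverage_congr_sphere hconj, circleAverage_fun_smul,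
    circleAverage_conj hint, circleAverage_sub_pow_smul_eq_zero (by rwa [abs_of_pos hR]) hn,
    map_zero, smul_zero]

theorem circleAverage_inv_sub_pow_mul_two_mul_re {f : ℂ → ℂ} (hR : 0 < R)
    (hf : DiffContOnCl ℂ f (ball c R)) (hn : n ≠ 0) :
    circleAverage (fun z ↦ ((z - c) ^ n)⁻¹ * (2 * (f z).re : ℝ)) c R =
      (n ! : ℂ)⁻¹ * iteratedDeriv n f c := by
  have hpow : ContinuousOn (fun z ↦ ((z - c) ^ n)⁻¹) (sphere c R) :=
    ContinuousOn.inv₀ (by fun_prop) fun z hz ↦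
      pow_ne_zero _ (sub_ne_zero.2 (ne_of_mem_sphere hz hR.ne'))
  have hcont : ContinuousOn f (sphere c R) := hf.continuousOn_ball.mono sphere_subset_closedBall
  have hint : CircleIntegrable (fun z ↦ ((z - c) ^ n)⁻¹ * f z) c R :=
    (hpow.mul hcont).circleIntegrable hR.le
  have hint_conj : CircleIntegrable (fun z ↦ ((z - c) ^ n)⁻¹ * conj (f z)) c R :=
    (hpow.mul (continuous_conj.comp_continuousOn hcont)).circleIntegrable hR.le
  simp only [← add_conj, mul_add]
  rw [circleAverage_fun_add hint hint_conj, circleAverage_inv_sub_pow_mul_conj_eq_zero hR hf hn,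
    add_zero]
  exact circleAverage_inv_sub_pow_smul hR hf n

theorem norm_iteratedDeriv_le_of_forall_mem_sphere_re_nonneg {f : ℂ → ℂ} (hR : 0 < R)
    (hf : DiffContOnCl ℂ f (ball c R)) (hre : ∀ z ∈ sphere c R, 0 ≤ (f z).re) (hn : n ≠ 0) :
    ‖iteratedDeriv n f c‖ ≤ n ! * (2 * (f c).re) / R ^ n := by
  have hint : CircleIntegrable f c R :=
    (hf.continuousOn_ball.mono sphere_subset_closedBall).circleIntegrable hR.le
  have hmean : circleAverage f c R = f c := DiffContOnCl.circleAverage (by rwa [abs_of_pos hR])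
  have hnorm : EqOn (fun z ↦ ‖((z - c) ^ n)⁻¹ * (2 * (f z).re : ℝ)‖)
      (fun z ↦ (2 / R ^ n) • (f z).re) (sphere c |R|) := by
    intro z hz
    rw [abs_of_pos hR] at hz
    have hpos : 0 ≤ 2 * (f z).re := mul_nonneg zero_le_two (hre z hz)
    simp only [norm_mul _ (ofReal _), norm_inv, norm_pow, mem_sphere_iff_norm.1 hz,
      Complex.norm_of_nonneg hpos, smul_eq_mul]
    ring
  have hcoeff : (n ! : ℝ)⁻¹ * ‖iteratedDeriv n f c‖ ≤ 2 / R ^ n * (f c).re := by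
    calc (n ! : ℝ)⁻¹ * ‖iteratedDeriv n f c‖
        = ‖circleAverage (fun z ↦ ((z - c) ^ n)⁻¹ * (2 * (f z).re : ℝ)) c R‖ := by
          rw [circleAverage_inv_sub_pow_mul_two_mul_re hR hf hn, norm_mul, norm_inv,
            Complex.norm_natCast]
      _ ≤ circleAverage (fun z ↦ ‖((z - c) ^ n)⁻¹ * (2 * (f z).re : ℝ)‖) c R :=
          norm_circleAverage_le_circleAverage_norm _ _ _
      _ = 2 / R ^ n * (f c).re := by
          rw [circleAverage_congr_sphere hnorm, circleAverage_fun_smul, circleAverage_re hint,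
            hmean, smul_eq_mul]
  rw [inv_mul_le_iff₀ (by positivity)] at hcoeff
  exact hcoeff.trans_eq (by ring)

theorem norm_iteratedDeriv_le_of_forall_mem_sphere_re_le {f : ℂ → ℂ} {M : ℝ} (hR : 0 < R)
    (hf : DiffContOnCl ℂ f (ball c R)) (hre : ∀ z ∈ sphere c R, (f z).re ≤ M) (hn : n ≠ 0) :
    ‖iteratedDeriv n f c‖ ≤ n ! * (2 * (M - (f c).re)) / R ^ n := by
  have h := norm_iteratedDeriv_le_of_forall_mem_sphere_re_nonneg (f := fun z ↦ M - f z) hR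
    (hf.const_sub _) (by simpa using hre) hn
  simpa [iteratedDeriv_const_sub (Nat.pos_of_ne_zero hn)] using h

end Caratheodory

section BlaschkeFactor

open Complex Metric
open scoped ComplexConjugate

variable {w z : ℂ}

/-- The Blaschke factor of the unit disc with zero `w`, normalised to take the value `w` at `0`. -/
def blaschkeFactor (w z : ℂ) : ℂ := (w - z) / (1 - conj w * z)

theorem blaschkeFactor_zero_right (w : ℂ) : blaschkeFactor w 0 = w := by
  simp [blaschkeFactor]

theorem blaschkeFactor_ofReal (r x : ℝ) :
    blaschkeFactor r x = ((r - x) / (1 - r * x) : ℝ) := by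
  simp [blaschkeFactor]

theorem blaschkeFactor_eq_neg_inv_canonicalFactor (w z : ℂ) :
    blaschkeFactor w z = -(canonicalFactor 1 w z)⁻¹ := by
  rw [blaschkeFactor, canonicalFactor_apply, inv_div, ← neg_div]
  simp

theorem norm_blaschkeFactor_of_mem_sphere (hw : ‖w‖ < 1) (hz : z ∈ sphere (0 : ℂ) 1) :
    ‖blaschkeFactor w z‖ = 1 := by
  rw [blaschkeFactor_eq_neg_inv_canonicalFactor, norm_neg, norm_inv,
    norm_canonicalFactor_eval_circle_eq_one (mem_ball_zero_iff.2 hw) hz, inv_one]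

theorem one_sub_conj_mul_ne_zero (hw : ‖w‖ < 1) (hz : ‖z‖ ≤ 1) : 1 - conj w * z ≠ 0 := by
  have hlt : ‖conj w * z‖ < 1 := by
    rw [norm_mul, norm_conj]
    exact mul_lt_one_of_nonneg_of_lt_one_left (norm_nonneg w) hw hz
  intro h
  simp [← sub_eq_zero.1 h] at hlt

theorem differentiableOn_blaschkeFactor (hw : ‖w‖ < 1) :
    DifferentiableOn ℂ (blaschkeFactor w) (closedBall 0 1) := by
  refine DifferentiableOn.div (by fun_prop) (by fun_prop) fun z hz ↦ ?_
  exact one_sub_conj_mul_ne_zero hw (mem_closedBall_zero_iff.1 hz)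

end BlaschkeFactor

theorem iteratedDeriv_pow_eq_zero {𝕜 : Type*} [NontriviallyNormedField 𝕜] [CharZero 𝕜]
    [CompleteSpace 𝕜] {f : 𝕜 → 𝕜} {x : 𝕜} {j n : ℕ} (hf : AnalyticAt 𝕜 f x) (hx : f x = 0)
    (hj : j < n) : iteratedDeriv j (f ^ n) x = 0 := by
  have horder : (n : ℕ∞) ≤ analyticOrderAt (f ^ n) x := by
    rw [analyticOrderAt_pow hf, nsmul_eq_mul]
    exact le_mul_of_one_le_right' (Order.one_le_iff_ne_zero.2 (hf.analyticOrderAt_ne_zero.2 hx))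
  exact (natCast_le_analyticOrderAt_iff_iteratedDeriv_eq_zero (hf.pow n)).1 horder j hj

section RAlpha

open Complex Metric
open scoped Nat

variable {α r : ℝ} {k : ℕ}

theorem exists_memF_eqOn_Fsum_re {f : ℂ → ℂ} (hf : DiffContOnCl ℂ f (ball 0 1)) (hf0 : f 0 = 1)
    (hre : ∀ z ∈ sphere (0 : ℂ) 1, (f z).re ≤ 1 + α / 2) :
    ∃ a, memF α a ∧ EqOn (Fsum a) (fun x ↦ (f x).re) (Ioo (-1) 1) := by
  refine ⟨fun n ↦ ((n ! : ℂ)⁻¹ * iteratedDeriv n f 0).re, ⟨by simp [hf0], fun n hn ↦ ?_⟩,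
    fun x hx ↦ ?_⟩
  · have hcoeff : ‖iteratedDeriv n f 0‖ ≤ n ! * α := by
      refine (norm_iteratedDeriv_le_of_forall_mem_sphere_re_le one_pos hf hre
        (Nat.one_le_iff_ne_zero.1 hn)).trans_eq ?_
      rw [hf0, one_re, one_pow]
      ring
    calc |((n ! : ℂ)⁻¹ * iteratedDeriv n f 0).re|
        ≤ (n ! : ℝ)⁻¹ * ‖iteratedDeriv n f 0‖ := by
          simpa using abs_re_le_norm ((n ! : ℂ)⁻¹ * iteratedDeriv n f 0)
      _ ≤ α := by rwa [inv_mul_le_iff₀ (by positivity)]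
  · have hball : (x : ℂ) ∈ ball 0 1 := by simpa [abs_lt] using hx
    have hsum := hasSum_re (hasSum_taylorSeries_on_ball hf.differentiableOn hball)
    refine (tsum_congr fun n ↦ ?_).trans hsum.tsum_eq
    rw [← re_mul_ofReal, ofReal_pow, sub_zero, smul_eq_mul, smul_eq_mul, mul_assoc,
      mul_comm (iteratedDeriv n f 0)]

theorem exists_memF_iteratedDeriv_Fsum_eq_zero (hr0 : 0 < r) (hr1 : r < 1)
    (hrα : r⁻¹ ^ (k + 1) ≤ 1 + α / 2) :
    ∃ a, memF α a ∧ ∀ j ≤ k, iteratedDeriv j (Fsum a) r = 0 := by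
  have hnorm : ‖(r : ℂ)‖ < 1 := by rwa [Complex.norm_of_nonneg hr0.le]
  let f : ℂ → ℂ := fun z ↦ (blaschkeFactor r z / r) ^ (k + 1)
  let g : ℝ → ℝ := fun x ↦ (r - x) / (1 - r * x) / r
  have hf : DiffContOnCl ℂ f (ball 0 1) :=
    (((differentiableOn_blaschkeFactor hnorm).div_const _).pow _).diffContOnCl_ball subset_rfl
  have hf0 : f 0 = 1 := by simp [f, blaschkeFactor_zero_right, hr0.ne']
  have hre : ∀ z ∈ sphere (0 : ℂ) 1, (f z).re ≤ 1 + α / 2 := by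
    intro z hz
    calc (f z).re ≤ ‖f z‖ := re_le_norm _
      _ = r⁻¹ ^ (k + 1) := by
        rw [norm_pow, norm_div, norm_blaschkeFactor_of_mem_sphere hnorm hz,
          Complex.norm_of_nonneg hr0.le, one_div]
      _ ≤ 1 + α / 2 := hrα
  obtain ⟨a, ha, hEqOn⟩ := exists_memF_eqOn_Fsum_re hf hf0 hre
  have hg : AnalyticAt ℝ g r := by
    have : 1 - r * r ≠ 0 := by nlinarith
    fun_prop (disch := assumption)
  have hlocal : Fsum a =ᶠ[nhds r] g ^ (k + 1) := by
    filter_upwards [Ioo_mem_nhds (neg_one_lt_zero.trans hr0) hr1] with x hx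
    simp only [hEqOn hx, f, blaschkeFactor_ofReal, ← ofReal_div, ← ofReal_pow, ofReal_re, g,
      Pi.pow_apply]
  refine ⟨a, ha, fun j hj ↦ ?_⟩
  rw [hlocal.iteratedDeriv_eq]
  exact iteratedDeriv_pow_eq_zero hg (by simp [g]) (by lia)

theorem rAlpha_le (hr0 : 0 < r) (hr1 : r < 1) {a : ℕ → ℝ} (ha : memF α a)
    (hzero : ∀ j ≤ k, iteratedDeriv j (Fsum a) r = 0) : rAlpha α k ≤ r :=
  csInf_le ⟨0, fun _ hx ↦ hx.1.le⟩ ⟨hr0, hr1, a, ha, hzero⟩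

theorem rAlpha_upper_bound_general (α : ℝ) (hα : 0 < α) (k : ℕ) :
    rAlpha α k ≤ (1 + α / 2) ^ (-(k + 1 : ℝ)⁻¹) := by
  have hbase : 1 < 1 + α / 2 := by linarith
  have hr0 : 0 < (1 + α / 2) ^ (-(k + 1 : ℝ)⁻¹) := by positivity
  have hr1 : (1 + α / 2) ^ (-(k + 1 : ℝ)⁻¹) < 1 :=
    Real.rpow_lt_one_of_one_lt_of_neg hbase (neg_lt_zero.2 (by positivity))
  have hpow : ((1 + α / 2) ^ (-(k + 1 : ℝ)⁻¹))⁻¹ ^ (k + 1) = 1 + α / 2 := by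
    rw [Real.rpow_neg (by positivity), inv_inv, ← Nat.cast_succ,
      Real.rpow_inv_natCast_pow (by positivity) k.succ_ne_zero]
  obtain ⟨a, ha, hzero⟩ := exists_memF_iteratedDeriv_Fsum_eq_zero hr0 hr1 hpow.le
  exact rAlpha_le hr0 hr1 ha hzero

end RAlpha

section Numerics

open Real

variable {α x : ℝ}

theorem min_div_nine_one_le_log (hα : 0 ≤ α) : min (α / 9) 1 ≤ log (1 + α / 2) := by
  calc min (α / 9) 1 ≤ 2 * (α / 2) / (α / 2 + 2) := by
        rw [le_div_iff₀ (by positivity)]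
        rcases le_total α 9 with h | h
        · nlinarith [min_le_left (α / 9) 1]
        · nlinarith [min_le_right (α / 9) 1]
    _ ≤ log (1 + α / 2) := le_log_one_add_of_nonneg (by positivity)

theorem exp_neg_inv_le_one_sub_one_div (hx : 0 < x) : exp (-x⁻¹) ≤ 1 - 1 / (x + 1) := by
  calc exp (-x⁻¹) = (exp x⁻¹)⁻¹ := exp_neg _
    _ ≤ (x⁻¹ + 1)⁻¹ := by gcongr; exact add_one_le_exp _
    _ = 1 - 1 / (x + 1) := by field_simp; ring

theorem one_add_half_rpow_neg_inv_le_rpow_min (hα : 0 ≤ α) (hx : 0 < x) :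
    (1 + α / 2) ^ (-x⁻¹) ≤ (1 - 1 / (x + 1)) ^ min (α / 9) 1 := by
  calc (1 + α / 2) ^ (-x⁻¹) = exp (-x⁻¹ * log (1 + α / 2)) := by
        rw [rpow_def_of_pos (by positivity), mul_comm]
    _ ≤ exp (-x⁻¹ * min (α / 9) 1) := by
        exact exp_le_exp.2 <| mul_le_mul_of_nonpos_left (min_div_nine_one_le_log hα)
          (neg_nonpos.2 (inv_nonneg.2 hx.le))
    _ = exp (-x⁻¹) ^ min (α / 9) 1 := exp_mul _ _
    _ ≤ (1 - 1 / (x + 1)) ^ min (α / 9) 1 := by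
        gcongr
        exact exp_neg_inv_le_one_sub_one_div hx

end Numerics

/-- Upper bound for `r_α(k)`: `r_α(k) ≤ (1 - 1/(k+2))^(min{α/9, 1})`. -/
theorem rAlpha_upper_bound (α : ℝ) (hα : 0 < α) (k : ℕ) :
    rAlpha α k ≤ (1 - 1 / ((k : ℝ) + 2)) ^ min (α / 9) 1 := by
  have hk : (k : ℝ) + 2 = k + 1 + 1 := by ring
  rw [hk]
  exact (rAlpha_upper_bound_general α hα k).trans
    (one_add_half_rpow_neg_inv_le_rpow_min hα.le (by positivity))
end
end

section
/- For every α > 0 one has r_α(k) < 1 for every integer k ≥ 0, and lim_{k→∞} r_α(k) = 1. -/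
open MeasureTheory Set Filter

noncomputable section

/-!
Multiplying a polynomial `p ∈ F_β` with `β ≤ 1` by `q(X ^ N)`, where `q ∈ F_β` and `N > deg p`,
stays in `F_β`, since each coefficient of the product is a coefficient of `p` times one of `q`.
Iterating this with `q = 1 - (∑ y ^ m)⁻¹ ∑ X ^ m`, whose root `y = x ^ N` is close to `1`, produces
zeros of any order at points `x < 1`.

Conversely, every `p ∈ F_α` is bounded by `max 1 α / (1 - R)` on the disc of radius `R < 1` and has
`p(0) = 1`, so Jensen's formula bounds the order of its zeros in a smaller disc uniformly in `p`.
-/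

/-! ### Polynomials in `F_β` with a zero of high order near `1` -/

section Polynomials

open Polynomial
open scoped Topology

lemma memF.mono {α β : ℝ} {a : ℕ → ℝ} (ha : memF α a) (hαβ : α ≤ β) : memF β a :=
  ⟨ha.1, fun n hn => (ha.2 n hn).trans hαβ⟩

lemma memF.abs_le {α : ℝ} {a : ℕ → ℝ} (ha : memF α a) (n : ℕ) : |a n| ≤ max 1 α := by
  rcases n.eq_zero_or_pos with rfl | hn
  · simp [ha.1]
  · exact (ha.2 n hn).trans (le_max_right _ _)

lemma coeff_mul_expand_of_natDegree_lt {R : Type*} [CommSemiring R] {p : R[X]} {N : ℕ}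
    (hp : p.natDegree < N) (q : R[X]) (n : ℕ) :
    (p * expand R N q).coeff n = p.coeff (n % N) * q.coeff (n / N) := by
  have hN : 0 < N := Nat.zero_lt_of_lt hp
  rw [coeff_mul, Finset.sum_eq_single (n % N, N * (n / N)), coeff_expand_mul' hN]
  · rintro ⟨i, j⟩ hij hne
    rw [Finset.HasAntidiagonal.mem_antidiagonal] at hij
    rw [coeff_expand hN]
    split_ifs with hj
    · obtain ⟨m, rfl⟩ := hj
      have hi : N ≤ i := by
        by_contra! hi
        refine hne ?_
        simp [← hij, Nat.mod_eq_of_lt hi, Nat.add_mul_div_left _ _ hN, Nat.div_eq_of_lt hi]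
      rw [coeff_eq_zero_of_natDegree_lt (hp.trans_le hi), zero_mul]
    · exact mul_zero _
  · exact fun h => absurd (Finset.HasAntidiagonal.mem_antidiagonal.2 (Nat.mod_add_div n N)) h

lemma memF.coeff_mul_expand {β : ℝ} (hβ : β ≤ 1) {p q : ℝ[X]} (hp : memF β p.coeff)
    (hq : memF β q.coeff) {N : ℕ} (hN : p.natDegree < N) :
    memF β (p * expand ℝ N q).coeff := by
  refine ⟨by simp [coeff_mul_expand_of_natDegree_lt hN, hp.1, hq.1], fun n hn => ?_⟩
  rw [coeff_mul_expand_of_natDegree_lt hN]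
  rcases (n / N).eq_zero_or_pos with hdiv | hdiv
  · have hlt : n < N := (Nat.div_eq_zero_iff_lt (Nat.zero_lt_of_lt hN)).1 hdiv
    simpa [hdiv, hq.1, Nat.mod_eq_of_lt hlt] using hp.2 n hn
  · have hp_le : |p.coeff (n % N)| ≤ 1 := by simpa [hβ] using hp.abs_le (n % N)
    calc |p.coeff (n % N) * q.coeff (n / N)|
        = |p.coeff (n % N)| * |q.coeff (n / N)| := abs_mul _ _
      _ ≤ 1 * β := by gcongr; exact hq.2 _ hdiv
      _ = β := one_mul β

lemma exists_natDegree_le_memF_isRoot {β : ℝ} (hβ : 0 < β) :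
    ∃ M : ℕ, ∀ᶠ y in 𝓝 (1 : ℝ), ∃ q : ℝ[X], q.natDegree ≤ M ∧ memF β q.coeff ∧ q.IsRoot y := by
  obtain ⟨M, hM⟩ := exists_nat_gt β⁻¹
  have hcont : Continuous fun y : ℝ => ∑ m ∈ Finset.Icc 1 M, y ^ m := by fun_prop
  refine ⟨M, (hcont.continuousAt.eventually (lt_mem_nhds (by simpa using hM))).mono fun y hy => ?_⟩
  set s := ∑ m ∈ Finset.Icc 1 M, y ^ m with hs
  have hs0 : 0 < s := (inv_pos.2 hβ).trans hy
  have hcoeff (n : ℕ) : (1 - C s⁻¹ * ∑ m ∈ Finset.Icc 1 M, X ^ m : ℝ[X]).coeff n =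
      (if n = 0 then 1 else 0) - s⁻¹ * if n ∈ Finset.Icc 1 M then 1 else 0 := by
    simp only [coeff_sub, coeff_one, coeff_C_mul, finsetSum_coeff, coeff_X_pow,
      Finset.sum_ite_eq]
  refine ⟨1 - C s⁻¹ * ∑ m ∈ Finset.Icc 1 M, X ^ m, ?_, ⟨?_, fun n hn => ?_⟩, ?_⟩
  · refine natDegree_le_iff_coeff_eq_zero.2 fun n hn => ?_
    rw [hcoeff, if_neg (by lia), if_neg (by simp only [Finset.mem_Icc]; lia), mul_zero, sub_zero]
  · simp [hcoeff]
  · rw [hcoeff, if_neg (by lia), zero_sub, abs_neg]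
    split_ifs
    · rw [mul_one, abs_of_pos (inv_pos.2 hs0)]
      exact (inv_lt_of_inv_lt₀ hβ hy).le
    · simpa using hβ.le
  · simp [eval_finsetSum, ← hs, hs0.ne']

lemma exists_natDegree_lt_memF_pow_dvd {β : ℝ} (hβ0 : 0 < β) (hβ1 : β ≤ 1) (k : ℕ) :
    ∃ N : ℕ, ∀ᶠ x in 𝓝 (1 : ℝ), ∃ p : ℝ[X],
      p.natDegree < N ∧ memF β p.coeff ∧ (X - C x) ^ k ∣ p := by
  obtain ⟨M, hM⟩ := exists_natDegree_le_memF_isRoot hβ0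
  induction k with
  | zero =>
    refine ⟨1, Eventually.of_forall fun x => ⟨1, by simp, ⟨by simp, fun n hn => ?_⟩, by simp⟩⟩
    simpa [coeff_one, Nat.one_le_iff_ne_zero.1 hn] using hβ0.le
  | succ k ih =>
    obtain ⟨N, hN⟩ := ih
    have hpow : Tendsto (fun x : ℝ => x ^ N) (𝓝 1) (𝓝 1) := by
      simpa using (continuous_pow N).tendsto (1 : ℝ)
    refine ⟨(M + 1) * N, ?_⟩
    filter_upwards [hN, hpow.eventually hM] with x ⟨p, hpN, hp, hdvd⟩ ⟨q, hqM, hq, hroot⟩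
    refine ⟨p * expand ℝ N q, ?_, hp.coeff_mul_expand hβ1 hq hpN, ?_⟩
    · calc (p * expand ℝ N q).natDegree
          ≤ p.natDegree + q.natDegree * N := natDegree_mul_le.trans_eq (by rw [natDegree_expand])
        _ < N + M * N := add_lt_add_of_lt_of_le hpN (by gcongr)
        _ = (M + 1) * N := by ring
    · rw [pow_succ]
      refine mul_dvd_mul hdvd (dvd_iff_isRoot.2 ?_)
      rw [IsRoot.def, expand_eval, hroot]

lemma Fsum_coeff_s11 (p : ℝ[X]) : Fsum p.coeff = fun t => p.eval t := by
  funext t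
  rw [Fsum, eval_eq_sum_range, tsum_eq_sum]
  intro n hn
  rw [coeff_eq_zero_of_natDegree_lt, zero_mul]
  simpa [Nat.lt_succ_iff] using hn

lemma natCast_le_analyticOrderAt_eval_of_pow_dvd {𝕜 : Type*} [NontriviallyNormedField 𝕜]
    {p : 𝕜[X]} {x : 𝕜} {m : ℕ} (h : (X - C x) ^ m ∣ p) :
    m ≤ analyticOrderAt (fun t => p.eval t) x := by
  obtain ⟨q, rfl⟩ := h
  exact (natCast_le_analyticOrderAt (AnalyticOnNhd.eval_polynomial _ x trivial)).2
    ⟨fun t => q.eval t, AnalyticOnNhd.eval_polynomial q x trivial,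
      Eventually.of_forall fun t => by simp⟩

end Polynomials

/-! ### Power series with bounded coefficients -/

section BoundedCoefficients

lemma analyticAt_tsum_mul_pow {𝕜 : Type*} [NontriviallyNormedField 𝕜] [CompleteSpace 𝕜]
    {c : ℕ → 𝕜} {B : ℝ} (hc : ∀ n, ‖c n‖ ≤ B) {z : 𝕜} (hz : ‖z‖ < 1) :
    AnalyticAt 𝕜 (fun w => ∑' n, c n * w ^ n) z := by
  let P := FormalMultilinearSeries.ofScalars 𝕜 c
  have hradius : ((1 : NNReal) : ENNReal) ≤ P.radius :=
    P.le_radius_of_bound B fun n => by simpa [P, FormalMultilinearSeries.ofScalars_norm] using hc n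
  have hsum : (fun w => ∑' n, c n * w ^ n) = P.sum :=
    (FormalMultilinearSeries.ofScalarsSum_eq_tsum (E := 𝕜) c).symm
  rw [hsum]
  refine (P.hasFPowerSeriesOnBall (one_pos.trans_le hradius)).analyticAt_of_mem
    (Metric.eball_subset_eball hradius ?_)
  simpa [← ofReal_norm, edist_zero_right] using hz

lemma norm_tsum_mul_pow_le {𝕜 : Type*} [NormedField 𝕜] {c : ℕ → 𝕜} {B : ℝ}
    (hc : ∀ n, ‖c n‖ ≤ B) {z : 𝕜} (hz : ‖z‖ < 1) :
    ‖∑' n, c n * z ^ n‖ ≤ B * (1 - ‖z‖)⁻¹ := by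
  refine tsum_of_norm_bounded ((hasSum_geometric_of_lt_one (norm_nonneg z) hz).mul_left B) ?_
  intro n
  rw [norm_mul, norm_pow]
  gcongr
  exact hc n

end BoundedCoefficients

/-! ### Orders of vanishing -/

section AnalyticOrder

lemma analyticOrderAt_continuousLinearMap_comp {𝕜 E F : Type*} [NontriviallyNormedField 𝕜]
    [NormedAddCommGroup E] [NormedSpace 𝕜 E] [NormedAddCommGroup F] [NormedSpace 𝕜 F]
    (L : E →L[𝕜] F) (hL : Function.Injective L) {f : 𝕜 → E} {x : 𝕜} (hf : AnalyticAt 𝕜 f x) :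
    analyticOrderAt (fun t => L (f t)) x = analyticOrderAt f x := by
  have hLf : AnalyticAt 𝕜 (fun t => L (f t)) x := (L.analyticAt _).comp hf
  cases hord : analyticOrderAt f x with
  | top =>
    rw [analyticOrderAt_eq_top] at hord ⊢
    exact hord.mono fun t ht => by rw [ht, map_zero]
  | coe n =>
    obtain ⟨g, hg, hgx, hfg⟩ := hf.analyticOrderAt_eq_natCast.1 hord
    exact hLf.analyticOrderAt_eq_natCast.2 ⟨fun t => L (g t), (L.analyticAt _).comp hg,
      (map_ne_zero_iff L hL).2 hgx, hfg.mono fun t ht => by rw [ht, map_smul]⟩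

lemma analyticOrderAt_comp_ofReal {E : Type*} [NormedAddCommGroup E] [NormedSpace ℂ E]
    {f : ℂ → E} {x : ℝ} (hf : AnalyticAt ℂ f x) :
    analyticOrderAt (fun t : ℝ => f t) x = analyticOrderAt f (x : ℂ) := by
  have hrestrict {g : ℂ → E} (hg : AnalyticAt ℂ g x) : AnalyticAt ℝ (fun t : ℝ => g t) x :=
    hg.restrictScalars.comp (Complex.ofRealCLM.analyticAt x)
  have hofReal : Tendsto ((↑) : ℝ → ℂ) (nhds x) (nhds x) := Complex.continuous_ofReal.tendsto x
  cases hord : analyticOrderAt f (x : ℂ) with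
  | top =>
    rw [analyticOrderAt_eq_top] at hord ⊢
    exact hofReal.eventually hord
  | coe n =>
    obtain ⟨g, hg, hgx, hfg⟩ := hf.analyticOrderAt_eq_natCast.1 hord
    refine (hrestrict hf).analyticOrderAt_eq_natCast.2 ⟨fun t => g t, hrestrict hg, hgx, ?_⟩
    filter_upwards [hofReal.eventually hfg] with t ht
    rw [ht, ← Complex.ofReal_sub, ← Complex.ofReal_pow, Complex.coe_smul]

lemma natCast_le_log_div_log_of_le_analyticOrderAt {f : ℂ → ℂ} {c u : ℂ} {r R M : ℝ} {m : ℕ}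
    (hr : 0 < r) (hrR : r < R) (hM : 1 ≤ M) (hf : AnalyticOnNhd ℂ f (Metric.closedBall c R))
    (hfc : f c ≠ 0) (hfM : ∀ z ∈ Metric.sphere c R, ‖f z‖ ≤ M) (hu : u ∈ Metric.closedBall c r)
    (hm : m ≤ analyticOrderAt f u) :
    (m : ℝ) ≤ Real.log (M / ‖f c‖) / Real.log (R / r) := by
  have hR : 0 < R := hr.trans hrR
  have hfr : AnalyticOnNhd ℂ f (Metric.closedBall c r) :=
    hf.mono (Metric.closedBall_subset_closedBall hrR.le)
  have hne_top : analyticOrderAt f u ≠ ⊤ := fun htop =>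
    hfc (hfr.eqOn_zero_of_preconnected_of_eventuallyEq_zero
      (convex_closedBall c r).isPreconnected hu (analyticOrderAt_eq_top.1 htop)
      (Metric.mem_closedBall_self hr.le))
  have hm_le : (m : ℤ) ≤ MeromorphicOn.divisor f (Metric.closedBall c r) u := by
    rw [MeromorphicOn.AnalyticOnNhd.divisor_apply hfr hu]
    lift analyticOrderAt f u to ℕ using hne_top with n
    simpa using hm
  have hdivisor_le : MeromorphicOn.divisor f (Metric.closedBall c r) u ≤
      ∑ᶠ v, MeromorphicOn.divisor f (Metric.closedBall c r) v :=
    single_le_finsum u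
      ((MeromorphicOn.divisor f _).finiteSupport (isCompact_closedBall c r))
      (MeromorphicOn.AnalyticOnNhd.divisor_nonneg hfr)
  have hjensen := AnalyticOnNhd.sum_divisor_le (c := c) (r := r) (R := R) (abs_pos_of_pos hr)
    (by rwa [abs_of_pos hr, abs_of_pos hR]) hM (by rwa [abs_of_pos hR]) hfc
    (by rwa [abs_of_pos hR])
  rw [abs_of_pos hr] at hjensen
  exact le_trans (mod_cast hm_le.trans hdivisor_le) hjensen

end AnalyticOrder

/-! ### Multiple zeros of series in `F_α` -/

/-- The extension of `Fsum a` to the complex unit disc, to which Jensen's formula applies. -/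
def complexFsum (a : ℕ → ℝ) (z : ℂ) : ℂ := ∑' n : ℕ, (a n : ℂ) * z ^ n

lemma complexFsum_ofReal (a : ℕ → ℝ) (t : ℝ) : complexFsum a t = Fsum a t := by
  simp [complexFsum, Fsum, Complex.ofReal_tsum]

lemma complexFsum_zero (a : ℕ → ℝ) : complexFsum a 0 = a 0 := by
  rw [complexFsum, tsum_eq_single 0 fun n hn => by simp [hn]]
  simp

lemma analyticOrderAt_complexFsum {a : ℕ → ℝ} {B : ℝ} (ha : ∀ n, |a n| ≤ B) {x : ℝ}
    (hx : |x| < 1) : analyticOrderAt (complexFsum a) (x : ℂ) = analyticOrderAt (Fsum a) x := by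
  have hF : AnalyticAt ℝ (Fsum a) x := analyticAt_tsum_mul_pow ha hx
  have hFc : AnalyticAt ℂ (complexFsum a) x :=
    analyticAt_tsum_mul_pow (c := fun n => (a n : ℂ)) (by simpa using ha) (by simpa using hx)
  rw [← analyticOrderAt_comp_ofReal hFc,
    ← analyticOrderAt_continuousLinearMap_comp Complex.ofRealCLM Complex.ofReal_injective hF]
  simp only [complexFsum_ofReal, Complex.ofRealCLM_apply]

/-- The points of `(0, 1)` at which some `p ∈ F_α` vanishes together with its first `k`
derivatives; `rAlpha α k` is by definition the infimum of this set. -/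
def multipleZeros (α : ℝ) (k : ℕ) : Set ℝ :=
  {x | 0 < x ∧ x < 1 ∧
    ∃ a : ℕ → ℝ, memF α a ∧ ∀ j : ℕ, j ≤ k → iteratedDeriv j (Fsum a) x = 0}

lemma mem_multipleZeros_iff {α x : ℝ} {k : ℕ} : x ∈ multipleZeros α k ↔
    0 < x ∧ x < 1 ∧ ∃ a, memF α a ∧ (k + 1 : ℕ) ≤ analyticOrderAt (Fsum a) x := by
  refine and_congr_right fun hx0 => and_congr_right fun hx1 => exists_congr fun a =>
    and_congr_right fun ha => ?_
  have hF : AnalyticAt ℝ (Fsum a) x :=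
    analyticAt_tsum_mul_pow ha.abs_le (by rwa [Real.norm_of_nonneg hx0.le])
  simp only [natCast_le_analyticOrderAt_iff_iteratedDeriv_eq_zero hF, Nat.lt_succ_iff]

lemma multipleZeros_nonempty {α : ℝ} (hα : 0 < α) (k : ℕ) : (multipleZeros α k).Nonempty := by
  obtain ⟨N, hN⟩ :=
    exists_natDegree_lt_memF_pow_dvd (lt_min hα one_pos) (min_le_right α 1) (k + 1)
  have hpos : ∀ᶠ x : ℝ in nhdsWithin 1 (Iio 1), 0 < x :=
    eventually_nhdsWithin_of_eventually_nhds (lt_mem_nhds one_pos)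
  obtain ⟨x, ⟨p, -, hp, hdvd⟩, hx0, hx1⟩ :=
    ((eventually_nhdsWithin_of_eventually_nhds hN).and (hpos.and self_mem_nhdsWithin)).exists
  refine ⟨x, mem_multipleZeros_iff.2 ⟨hx0, hx1, p.coeff, hp.mono (min_le_left α 1), ?_⟩⟩
  rw [Fsum_coeff_s11]
  exact natCast_le_analyticOrderAt_eval_of_pow_dvd hdvd

lemma add_one_le_of_mem_multipleZeros {α x r R : ℝ} {k : ℕ} (hx : x ∈ multipleZeros α k)
    (hxr : x ≤ r) (hrR : r < R) (hR : R < 1) :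
    (k + 1 : ℝ) ≤ Real.log (max 1 α * (1 - R)⁻¹) / Real.log (R / r) := by
  obtain ⟨hx0, hx1, a, ha, hord⟩ := mem_multipleZeros_iff.1 hx
  have hr : 0 < r := hx0.trans_le hxr
  have hcoeff (n : ℕ) : ‖(a n : ℂ)‖ ≤ max 1 α := by simpa using ha.abs_le n
  have hM : 1 ≤ max 1 α * (1 - R)⁻¹ :=
    one_le_mul_of_one_le_of_one_le (le_max_left 1 α)
      ((one_le_inv₀ (sub_pos.2 hR)).2 (by linarith))
  have hanalytic : AnalyticOnNhd ℂ (complexFsum a) (Metric.closedBall 0 R) := fun z hz =>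
    analyticAt_tsum_mul_pow hcoeff ((mem_closedBall_zero_iff.1 hz).trans_lt hR)
  have hbound : ∀ z ∈ Metric.sphere (0 : ℂ) R, ‖complexFsum a z‖ ≤ max 1 α * (1 - R)⁻¹ := by
    intro z hz
    rw [mem_sphere_zero_iff_norm] at hz
    simpa [complexFsum, hz] using norm_tsum_mul_pow_le hcoeff (hz.trans_lt hR)
  have hzero : complexFsum a 0 = 1 := by rw [complexFsum_zero, ha.1, Complex.ofReal_one]
  have hx_mem : (x : ℂ) ∈ Metric.closedBall 0 r := by simpa [abs_of_pos hx0] using hxr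
  rw [← analyticOrderAt_complexFsum ha.abs_le (by rwa [abs_of_pos hx0])] at hord
  simpa [hzero] using natCast_le_log_div_log_of_le_analyticOrderAt hr hrR hM hanalytic
    (by simp [hzero]) hbound hx_mem hord

lemma rAlpha_le_s11 {α x : ℝ} {k : ℕ} (hx : x ∈ multipleZeros α k) : rAlpha α k ≤ x :=
  csInf_le ⟨0, fun _ hy => hy.1.le⟩ hx

lemma le_rAlpha {α r : ℝ} {k : ℕ} (hα : 0 < α) (hr : ∀ x ∈ multipleZeros α k, r ≤ x) :
    r ≤ rAlpha α k :=
  le_csInf (multipleZeros_nonempty hα k) hr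

/-- For every `α > 0`, `r_α(k) < 1` for every `k` and `r_α(k) → 1` as `k → ∞`. -/
theorem rAlpha_lt_one_tendsto_one (α : ℝ) (hα : 0 < α) :
    (∀ k : ℕ, rAlpha α k < 1) ∧
      Filter.Tendsto (fun k : ℕ => rAlpha α k) Filter.atTop (nhds 1) := by
  have hlt (k : ℕ) : rAlpha α k < 1 := by
    obtain ⟨x, hx⟩ := multipleZeros_nonempty hα k
    exact (rAlpha_le_s11 hx).trans_lt hx.2.1
  refine ⟨hlt, tendsto_order.2 ⟨fun b hb => ?_, fun b hb => .of_forall fun k => (hlt k).trans hb⟩⟩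
  obtain ⟨r, hbr, hr1⟩ := exists_between hb
  obtain ⟨R, hrR, hR1⟩ := exists_between hr1
  filter_upwards [tendsto_natCast_atTop_atTop.eventually_ge_atTop
    (Real.log (max 1 α * (1 - R)⁻¹) / Real.log (R / r))] with k hk
  refine hbr.trans_le (le_rAlpha hα fun x hx => le_of_not_ge fun hxr => ?_)
  linarith [add_one_le_of_mem_multipleZeros hx hxr hrR hR1]
end
end

section
/- For every α > 0, every integer k ≥ 1 and every τ > 0 there exists δ ∈ (0,1) such that for every p ∈ F_α and every x ∈ [0, r_α(k) − τ]: if |p(x)| < δ, then max_{1 ≤ j ≤ k} |p^{(j)}(x)| ≥ δ. -/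
/-!
By Tychonoff, `F_α` is compact for coefficientwise convergence. Each derivative `p⁽ʲ⁾(x)` is jointly
continuous in `(p, x) ∈ F_α × (-1, 1)`: for `|x| ≤ r < 1` its series is dominated by a multiple of
`∑ n (n - 1) ⋯ (n - j + 1) rⁿ⁻ʲ`. On the compact set `F_α × [0, r_α(k) - τ]` the functions
`p, p', …, p⁽ᵏ⁾` have no common zero, by definition of `r_α(k)` and because `p(0) = 1`; hence
`max_{0 ≤ j ≤ k} |p⁽ʲ⁾(x)|` is bounded below there by some `δ > 0`.
-/

open MeasureTheory Set Filter

noncomputable section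

lemma exists_pos_forall_exists_le_norm_of_isCompact {X ι E : Type*} [TopologicalSpace X]
    [NormedAddCommGroup E] {K : Set X} (hK : IsCompact K) (J : Finset ι) {f : ι → X → E}
    (hf : ∀ j ∈ J, ContinuousOn (f j) K) (hne : ∀ x ∈ K, ∃ j ∈ J, f j x ≠ 0) :
    ∃ ε > 0, ∀ x ∈ K, ∃ j ∈ J, ε ≤ ‖f j x‖ := by
  have hcont : ContinuousOn (fun x ↦ J.sup fun j ↦ ‖f j x‖₊) K :=
    ContinuousOn.finset_sup_apply fun j hj ↦ (hf j hj).nnnorm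
  have hpos : ∀ x ∈ K, 0 < J.sup fun j ↦ ‖f j x‖₊ := fun x hx ↦
    Finset.lt_sup_iff.2 <| (hne x hx).imp fun j ⟨hj, hjx⟩ ↦ ⟨hj, nnnorm_pos.2 hjx⟩
  obtain ⟨ε, hε, hle⟩ := hK.exists_forall_le' hcont hpos
  exact ⟨ε, hε, fun x hx ↦ (Finset.le_sup_iff hε).1 (hle x hx)⟩

section PowerSeries

lemma summable_descFactorial_mul_pow_sub {R : Type*} [NormedRing R] [HasSummableGeomSeries R]
    (j : ℕ) {r : R} (hr : ‖r‖ < 1) :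
    Summable fun n : ℕ ↦ (n.descFactorial j : R) * r ^ (n - j) :=
  (summable_nat_add_iff j).1 <| by
    simpa only [Nat.add_sub_cancel] using summable_descFactorial_mul_geometric_of_norm_lt_one j hr

variable {𝕜 : Type*} [RCLike 𝕜]

lemma norm_mul_descFactorial_mul_pow_le {c x : 𝕜} {C r : ℝ} (hc : ‖c‖ ≤ C) (hx : ‖x‖ ≤ r)
    (n j : ℕ) :
    ‖c * (n.descFactorial j * x ^ (n - j))‖ ≤ C * (n.descFactorial j * r ^ (n - j)) := by
  have hC : 0 ≤ C := (norm_nonneg c).trans hc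
  rw [norm_mul, norm_mul, norm_pow, RCLike.norm_natCast]
  gcongr

lemma summableLocallyUniformlyOn_mul_descFactorial_mul_pow {a : ℕ → 𝕜} {C : ℝ}
    (ha : ∀ n, ‖a n‖ ≤ C) (j : ℕ) :
    SummableLocallyUniformlyOn (fun n x ↦ a n * (n.descFactorial j * x ^ (n - j)))
      (Metric.ball 0 1) := by
  refine SummableLocallyUniformlyOn_of_locally_bounded Metric.isOpen_ball fun K hK hKc ↦ ?_
  obtain ⟨r, ⟨hr₀, hr₁⟩, hKr⟩ := exists_pos_lt_subset_ball one_pos hKc.isClosed hK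
  have hr : ‖r‖ < 1 := by rwa [Real.norm_of_nonneg hr₀.le]
  exact ⟨_, (summable_descFactorial_mul_pow_sub j hr).mul_left C, fun n x hx ↦
    norm_mul_descFactorial_mul_pow_le (ha n) (mem_ball_zero_iff.1 (hKr hx)).le n j⟩

lemma iteratedDeriv_const_mul_pow (c : 𝕜) (n j : ℕ) :
    iteratedDeriv j (fun y ↦ c * y ^ n) = fun y ↦ c * (n.descFactorial j * y ^ (n - j)) := by
  ext y
  rw [iteratedDeriv_const_mul_field, iteratedDeriv_pow]

theorem iteratedDeriv_tsum_mul_pow {a : ℕ → 𝕜} {C : ℝ} (ha : ∀ n, ‖a n‖ ≤ C) (j : ℕ) {x : 𝕜}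
    (hx : x ∈ Metric.ball 0 1) :
    iteratedDeriv j (fun y ↦ ∑' n, a n * y ^ n) x =
      ∑' n, a n * (n.descFactorial j * x ^ (n - j)) := by
  have hterm (n i : ℕ) : EqOn (iteratedDerivWithin i (fun y ↦ a n * y ^ n) (Metric.ball 0 1))
      (fun y ↦ a n * (n.descFactorial i * y ^ (n - i))) (Metric.ball 0 1) := by
    rw [← iteratedDeriv_const_mul_pow]
    exact iteratedDerivWithin_of_isOpen Metric.isOpen_ball
  rw [← iteratedDerivWithin_of_isOpen Metric.isOpen_ball hx,
    iteratedDerivWithin_tsum j Metric.isOpen_ball hx]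
  · exact tsum_congr fun n ↦ hterm n j hx
  · intro y hy
    simpa using (summableLocallyUniformlyOn_mul_descFactorial_mul_pow ha 0).summable hy
  · exact fun i _ _ ↦ SummableLocallyUniformlyOn_congr (fun n ↦ (hterm n i).symm)
      (summableLocallyUniformlyOn_mul_descFactorial_mul_pow ha i)
  · intro n i y _ hy
    have hdiff : DifferentiableAt 𝕜 (fun y ↦ a n * (n.descFactorial i * y ^ (n - i))) y := by
      fun_prop
    exact hdiff.congr_of_eventuallyEq ((hterm n i).eventuallyEq_of_mem
      (Metric.isOpen_ball.mem_nhds hy))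

theorem continuousOn_iteratedDeriv_tsum_mul_pow (C : ℝ) (j : ℕ) :
    ContinuousOn (fun q : (ℕ → 𝕜) × 𝕜 ↦ iteratedDeriv j (fun y ↦ ∑' n, q.1 n * y ^ n) q.2)
      ({a | ∀ n, ‖a n‖ ≤ C} ×ˢ Metric.ball 0 1) := by
  refine ContinuousOn.congr (f := fun q : (ℕ → 𝕜) × 𝕜 ↦
    ∑' n, q.1 n * (n.descFactorial j * q.2 ^ (n - j))) ?_
    fun q hq ↦ iteratedDeriv_tsum_mul_pow hq.1 j hq.2
  refine continuousOn_of_locally_continuousOn fun q hq ↦ ?_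
  obtain ⟨r, hqr, hr₁⟩ := exists_between (mem_ball_zero_iff.1 hq.2)
  have hr : ‖r‖ < 1 := by rwa [Real.norm_of_nonneg ((norm_nonneg _).trans hqr.le)]
  refine ⟨Prod.snd ⁻¹' Metric.ball 0 r, Metric.isOpen_ball.preimage continuous_snd,
    mem_ball_zero_iff.2 hqr, ?_⟩
  refine continuousOn_tsum (fun n ↦ by fun_prop)
    ((summable_descFactorial_mul_pow_sub j hr).mul_left C) fun n p hp ↦ ?_
  exact norm_mul_descFactorial_mul_pow_le (hp.1.1 n) (mem_ball_zero_iff.1 hp.2).le n j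

end PowerSeries

lemma isCompact_setOf_memF (α : ℝ) : IsCompact {a | memF α a} := by
  have hpi : {a | memF α a} = univ.pi fun n ↦ if n = 0 then {1} else Icc (-α) α := by
    ext a
    simp only [memF, mem_ofPred_eq, mem_univ_pi, abs_le, Nat.one_le_iff_ne_zero]
    refine ⟨fun h n ↦ ?_, fun h ↦ ⟨by simpa using h 0, fun n hn ↦ by simpa [hn] using h n⟩⟩
    split_ifs with hn
    · simp [hn, h.1]
    · exact h.2 n hn
  rw [hpi]
  refine isCompact_univ_pi fun n ↦ ?_
  split_ifs
  exacts [isCompact_singleton, isCompact_Icc]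

lemma memF.norm_le {α : ℝ} {a : ℕ → ℝ} (ha : memF α a) (n : ℕ) : ‖a n‖ ≤ max 1 α := by
  rcases n.eq_zero_or_pos with rfl | hn
  · simp [ha.1]
  · exact (ha.2 n hn).trans (le_max_right _ _)

lemma Fsum_apply_zero (a : ℕ → ℝ) : Fsum a 0 = a 0 := by
  rw [Fsum, tsum_eq_single 0 fun n hn ↦ by simp [hn], pow_zero, mul_one]

lemma continuousOn_iteratedDeriv_Fsum (α : ℝ) (j : ℕ) :
    ContinuousOn (fun q : (ℕ → ℝ) × ℝ ↦ iteratedDeriv j (Fsum q.1) q.2)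
      ({a | memF α a} ×ˢ Metric.ball 0 1) :=
  (continuousOn_iteratedDeriv_tsum_mul_pow (max 1 α) j).mono <|
    prod_mono_left fun _ ha ↦ ha.norm_le

lemma rAlpha_lt_one (α : ℝ) (k : ℕ) : rAlpha α k < 1 := by
  obtain h | ⟨x, hx⟩ := eq_empty_or_nonempty {x : ℝ | 0 < x ∧ x < 1 ∧
    ∃ a : ℕ → ℝ, memF α a ∧ ∀ j : ℕ, j ≤ k → iteratedDeriv j (Fsum a) x = 0}
  · rw [rAlpha, h, Real.sInf_empty]
    exact one_pos
  · exact (csInf_le ⟨0, fun _ hy ↦ hy.1.le⟩ hx).trans_lt hx.2.1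

lemma memF.exists_iteratedDeriv_ne_zero {α : ℝ} {a : ℕ → ℝ} (ha : memF α a) {k : ℕ} {x : ℝ}
    (hx₀ : 0 ≤ x) (hx : x < rAlpha α k) : ∃ j ≤ k, iteratedDeriv j (Fsum a) x ≠ 0 := by
  obtain rfl | hx₀ := hx₀.eq_or_lt
  · exact ⟨0, k.zero_le, by simp [Fsum_apply_zero, ha.1]⟩
  · by_contra! hzero
    exact notMem_of_lt_csInf hx ⟨0, fun _ hy ↦ hy.1.le⟩
      ⟨hx₀, hx.trans (rAlpha_lt_one α k), a, ha, hzero⟩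

/-- `(δ,k)`-transversality: for every `k ≥ 1` and `τ > 0` there is `δ ∈ (0,1)` such that
for every `p ∈ F_α` and `x ∈ [0, r_α(k) - τ]`, if `|p(x)| < δ` then some derivative
`p⁽ʲ⁾(x)`, `1 ≤ j ≤ k`, satisfies `|p⁽ʲ⁾(x)| ≥ δ`. -/
theorem delta_k_transversality (α : ℝ) (hα : 0 < α) (k : ℕ) (hk : 1 ≤ k)
    (τ : ℝ) (hτ : 0 < τ) :
    ∃ δ : ℝ, δ ∈ Set.Ioo (0 : ℝ) 1 ∧ ∀ a : ℕ → ℝ, memF α a →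
      ∀ x ∈ Set.Icc (0 : ℝ) (rAlpha α k - τ), |Fsum a x| < δ →
        ∃ j : ℕ, 1 ≤ j ∧ j ≤ k ∧ δ ≤ |iteratedDeriv j (Fsum a) x| := by
  have hlt : ∀ x ∈ Icc 0 (rAlpha α k - τ), x < rAlpha α k := fun x hx ↦ by linarith [hx.2]
  have hball : Icc 0 (rAlpha α k - τ) ⊆ Metric.ball 0 1 := fun x hx ↦ by
    rw [mem_ball_zero_iff, Real.norm_of_nonneg hx.1]
    exact (hlt x hx).trans (rAlpha_lt_one α k)
  obtain ⟨ε, hε, hle⟩ := exists_pos_forall_exists_le_norm_of_isCompact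
    ((isCompact_setOf_memF α).prod isCompact_Icc) (Finset.Iic k)
    (fun j _ ↦ (continuousOn_iteratedDeriv_Fsum α j).mono (prod_mono_right hball))
    fun q hq ↦ by
      simpa only [Finset.mem_Iic] using
        memF.exists_iteratedDeriv_ne_zero hq.1 hq.2.1 (hlt q.2 hq.2)
  refine ⟨min ε (1 / 2), ⟨by positivity, by norm_num⟩, fun a ha x hx hax ↦ ?_⟩
  obtain ⟨j, hjk, hj⟩ := hle (a, x) ⟨ha, hx⟩
  have hj₀ : j ≠ 0 := by
    rintro rfl
    rw [iteratedDeriv_zero, Real.norm_eq_abs] at hj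
    exact (hax.trans_le ((min_le_left _ _).trans hj)).false
  exact ⟨j, Nat.one_le_iff_ne_zero.2 hj₀, Finset.mem_Iic.1 hjk, (min_le_left _ _).trans hj⟩
end
end
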